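/- arXiv:1808.08454 — 11 statements merged into one kernel-verified Lean document; each statement's English description precedes it below -/
import Mathlib

section
/- Let c ≠ 0 be a real number, Γ : ℝ → ℝ² a smooth curve with [Γ(t), Γ'(t)] = 1 for all t, and p : ℝ → ℝ a smooth function with Γ''(t) = p(t)Γ(t) for all t. Let a : ℝ → ℝ be smooth and set Δ(t) := a(t)Γ(t) + cΓ'(t). Then [Δ(t), Δ'(t)] = 1 for all t if and only if a satisfies the Riccati equation a'(t) = (a(t)² − 1)/c − c·p(t) for all t. -/
open Real

/-- The determinant of the 2×2 matrix with columns `u`, `v` in `ℝ²`. -/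
def det2 (u v : ℝ × ℝ) : ℝ := u.1 * v.2 - u.2 * v.1

/-!
By the Hill equation `Γ'' = pΓ`, the curve `Δ = aΓ + cΓ'` satisfies `Δ' = (a' + cp)Γ + aΓ'`.
Expanding in the frame `(Γ, Γ')`, on which the alternating form takes the value `1`, gives
`[Δ, Δ'] = a² - c(a' + cp)`. For `c ≠ 0` this equals `1` exactly when `a` solves the Riccati
equation, at each time `t` separately.
-/

theorem apply_smul_add_smul_of_isAlt {R M : Type*} [CommRing R] [AddCommGroup M] [Module R M]
    {ω : LinearMap.BilinForm R M} (hω : ω.IsAlt) (a b c d : R) (u v : M) :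
    ω (a • u + b • v) (c • u + d • v) = (a * d - b * c) * ω u v := by
  have hvu : ω v u = -ω u v := (hω.neg_eq u v).symm
  simp only [map_add, map_smul, LinearMap.add_apply, LinearMap.smul_apply, smul_eq_mul,
    hω.self_eq_zero, hvu]
  ring

theorem mul_self_sub_mul_add_eq_one_iff {K : Type*} [Field K] {c : K} (hc : c ≠ 0)
    (a a' p : K) :
    a * a - c * (a' + c * p) = 1 ↔ a' = (a ^ 2 - 1) / c - c * p := by
  rw [eq_sub_iff_add_eq, eq_div_iff hc]
  constructor <;> intro h <;> linear_combination -h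

section CentroAffine

variable {𝕜 E : Type*} [NontriviallyNormedField 𝕜] [NormedAddCommGroup E] [NormedSpace 𝕜 E]
  {Γ Γ' : 𝕜 → E} {a : 𝕜 → 𝕜} {a' p t : 𝕜}

theorem hasDerivAt_smul_add_smul_of_hill (c : 𝕜) (hΓ : HasDerivAt Γ (Γ' t) t)
    (hHill : HasDerivAt Γ' (p • Γ t) t) (ha : HasDerivAt a a' t) :
    HasDerivAt (fun s ↦ a s • Γ s + c • Γ' s) ((a' + c * p) • Γ t + a t • Γ' t) t := by
  convert (ha.fun_smul hΓ).fun_add (hHill.fun_const_smul c) using 1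
  module

theorem delta_centroaffine_iff_riccati_general {ω : LinearMap.BilinForm 𝕜 E} (hω : ω.IsAlt)
    {c : 𝕜} (hc : c ≠ 0) (hΓ : HasDerivAt Γ (Γ' t) t) (hdet : ω (Γ t) (Γ' t) = 1)
    (hHill : HasDerivAt Γ' (p • Γ t) t) (ha : HasDerivAt a a' t)
    {Δ : 𝕜 → E} (hΔ : ∀ s, Δ s = a s • Γ s + c • Γ' s) :
    ω (Δ t) (deriv Δ t) = 1 ↔ a' = (a t ^ 2 - 1) / c - c * p := by
  have hΔ' : deriv Δ t = (a' + c * p) • Γ t + a t • Γ' t := by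
    rw [funext hΔ, (hasDerivAt_smul_add_smul_of_hill c hΓ hHill ha).deriv]
  rw [hΔ', hΔ, apply_smul_add_smul_of_isAlt hω, hdet, mul_one,
    mul_self_sub_mul_add_eq_one_iff hc]

end CentroAffine

/-- The determinant `det2` as a bilinear form, through which results on alternating forms apply
to plane curves. -/
def det2Form : LinearMap.BilinForm ℝ (ℝ × ℝ) :=
  LinearMap.mk₂ ℝ det2
    (fun _ _ _ ↦ by simp only [det2, Prod.fst_add, Prod.snd_add]; ring)
    (fun _ _ _ ↦ by simp only [det2, Prod.smul_fst, Prod.smul_snd, smul_eq_mul]; ring)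
    (fun _ _ _ ↦ by simp only [det2, Prod.fst_add, Prod.snd_add]; ring)
    (fun _ _ _ ↦ by simp only [det2, Prod.smul_fst, Prod.smul_snd, smul_eq_mul]; ring)

theorem isAlt_det2Form : det2Form.IsAlt := fun u ↦ sub_eq_zero.2 (mul_comm u.1 u.2)

/-- For `Δ = aΓ + cΓ'`, the curve `Δ` is centro-affine (`[Δ, Δ'] = 1`) iff `a`
satisfies the Riccati equation `a' = (a² − 1)/c − c p`. -/
theorem delta_centroaffine_iff_riccati (c : ℝ) (hc : c ≠ 0)
    (Γ : ℝ → ℝ × ℝ) (hΓ : ContDiff ℝ (⊤ : ℕ∞) Γ)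
    (hdet : ∀ t, det2 (Γ t) (deriv Γ t) = 1)
    (p : ℝ → ℝ) (hp : ContDiff ℝ (⊤ : ℕ∞) p)
    (hHill : ∀ t, deriv (deriv Γ) t = p t • Γ t)
    (a : ℝ → ℝ) (ha : ContDiff ℝ (⊤ : ℕ∞) a)
    (Δ : ℝ → ℝ × ℝ) (hΔ : ∀ t, Δ t = a t • Γ t + c • deriv Γ t) :
    (∀ t, det2 (Δ t) (deriv Δ t) = 1) ↔
      (∀ t, deriv a t = (a t ^ 2 - 1) / c - c * p t) := by
  have hΓ' : Differentiable ℝ (deriv Γ) :=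
    (contDiff_infty_iff_deriv.1 hΓ).2.differentiable (by simp)
  exact forall_congr' fun t ↦ delta_centroaffine_iff_riccati_general isAlt_det2Form hc
    (hΓ.differentiable (by simp) t).hasDerivAt (hdet t) (hHill t ▸ (hΓ' t).hasDerivAt)
    (ha.differentiable (by simp) t).hasDerivAt hΔ
end

section
/- Let Γ : ℝ → ℝ² be a smooth curve with [Γ(t), Γ'(t)] = 1 for all t, and let h, f : ℝ → ℝ be smooth functions. Set v(t) := h(t)Γ(t) + f(t)Γ'(t). Then [Γ(t), v'(t)] = [Γ'(t), v(t)] for all t if and only if h(t) = −f'(t)/2 for all t. -/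
/-!
Pairing `v = hΓ + fΓ'` with `Γ` and with `Γ'` recovers the coefficients: `[Γ, v] = f` and
`[Γ', v] = -h`. Differentiating the first identity gives `f' = [Γ, v'] + [Γ', v]`, hence
`[Γ, v'] - [Γ', v] = f' - 2[Γ', v] = 2h + f'`.
-/

open Real

section AlternatingForm

variable {R M : Type*} [CommRing R] [AddCommGroup M] [Module R M] {B : LinearMap.BilinForm R M}

theorem apply_smul_add_smul_left_of_isAlt (hB : B.IsAlt) (x y : M) (a b : R) :
    B x (a • x + b • y) = b * B x y := by
  simp [hB.self_eq_zero x]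

theorem apply_smul_add_smul_right_of_isAlt (hB : B.IsAlt) (x y : M) (a b : R) :
    B y (a • x + b • y) = -(a * B x y) := by
  simp [hB.self_eq_zero y, ← hB.neg_eq x y]

end AlternatingForm

section MovingFrame

variable {𝕜 E : Type*} [NontriviallyNormedField 𝕜] [NormedAddCommGroup E] [NormedSpace 𝕜 E]
  {ω : E →L[𝕜] E →L[𝕜] 𝕜} {Γ v : 𝕜 → E} {h f : 𝕜 → 𝕜}

theorem apply_deriv_variation_sub_apply_deriv_curve (hω : ω.toBilinForm.IsAlt) {t : 𝕜}
    (hΓ : DifferentiableAt 𝕜 Γ t) (hv_diff : DifferentiableAt 𝕜 v t)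
    (hdet : ∀ s, ω (Γ s) (deriv Γ s) = 1)
    (hv : ∀ s, v s = h s • Γ s + f s • deriv Γ s) :
    ω (Γ t) (deriv v t) - ω (deriv Γ t) (v t) = 2 * h t + deriv f t := by
  have curve_apply_v (s : 𝕜) : ω (Γ s) (v s) = f s := by
    simpa [hdet, hv] using apply_smul_add_smul_left_of_isAlt hω (Γ s) (deriv Γ s) (h s) (f s)
  have tangent_apply_v : ω (deriv Γ t) (v t) = -h t := by
    simpa [hdet, hv] using apply_smul_add_smul_right_of_isAlt hω (Γ t) (deriv Γ t) (h t) (f t)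
  have deriv_f : deriv f t = ω (Γ t) (deriv v t) + ω (deriv Γ t) (v t) := by
    rw [← funext curve_apply_v]
    exact ω.deriv_of_bilinear (fun _ ↦ hΓ) (fun _ ↦ hv_diff)
  linear_combination -deriv_f - 2 * tangent_apply_v

theorem tangent_vector_characterization_general [NeZero (2 : 𝕜)] (hω : ω.toBilinForm.IsAlt)
    (hΓ : Differentiable 𝕜 Γ) (hv_diff : Differentiable 𝕜 v)
    (hdet : ∀ t, ω (Γ t) (deriv Γ t) = 1)
    (hv : ∀ t, v t = h t • Γ t + f t • deriv Γ t) :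
    (∀ t, ω (Γ t) (deriv v t) = ω (deriv Γ t) (v t)) ↔ ∀ t, h t = -(deriv f t) / 2 := by
  refine forall_congr' fun t ↦ ?_
  rw [← sub_eq_zero, apply_deriv_variation_sub_apply_deriv_curve hω (hΓ t) (hv_diff t) hdet hv,
    add_eq_zero_iff_eq_neg, eq_div_iff two_ne_zero, mul_comm]

theorem differentiable_smul_add_smul_deriv (hΓ : ContDiff 𝕜 2 Γ) (hh : Differentiable 𝕜 h)
    (hf : Differentiable 𝕜 f) : Differentiable 𝕜 fun t ↦ h t • Γ t + f t • deriv Γ t :=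
  (hh.smul (hΓ.differentiable two_ne_zero)).add (hf.smul hΓ.differentiable_deriv_two)

end MovingFrame

/-- The determinant `det2` as a continuous bilinear form, so that results on alternating forms
apply to it; `det2CLM u v` unfolds to `det2 u v`. -/
noncomputable def det2CLM : ℝ × ℝ →L[ℝ] ℝ × ℝ →L[ℝ] ℝ :=
  (ContinuousLinearMap.mul ℝ ℝ).bilinearComp (.fst ℝ ℝ ℝ) (.snd ℝ ℝ ℝ) -
    (ContinuousLinearMap.mul ℝ ℝ).bilinearComp (.snd ℝ ℝ ℝ) (.fst ℝ ℝ ℝ)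

theorem det2CLM_isAlt : det2CLM.toBilinForm.IsAlt := fun u ↦ by
  simp [det2CLM, mul_comm]

/-- For a variation `v = hΓ + fΓ'` of a centro-affine curve `Γ`, the linearized
constraint `[Γ, v'] = [Γ', v]` holds iff `h = −f'/2`. -/
theorem tangent_vector_characterization (Γ : ℝ → ℝ × ℝ) (hΓ : ContDiff ℝ (⊤ : ℕ∞) Γ)
    (hdet : ∀ t, det2 (Γ t) (deriv Γ t) = 1)
    (h f : ℝ → ℝ) (hh : ContDiff ℝ (⊤ : ℕ∞) h) (hf : ContDiff ℝ (⊤ : ℕ∞) f)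
    (v : ℝ → ℝ × ℝ) (hv : ∀ t, v t = h t • Γ t + f t • deriv Γ t) :
    (∀ t, det2 (Γ t) (deriv v t) = det2 (deriv Γ t) (v t)) ↔
      (∀ t, h t = -(deriv f t) / 2) := by
  have hv_diff : Differentiable ℝ v := funext hv ▸ differentiable_smul_add_smul_deriv
    (contDiff_infty.mp hΓ 2) (hh.differentiable (by simp)) (hf.differentiable (by simp))
  exact tangent_vector_characterization_general det2CLM_isAlt (hΓ.differentiable (by simp))
    hv_diff hdet hv
end

section
/- Let f : ℝ → ℝ be a smooth π-periodic function. Then ∫₀^π (f(t)g'(t) − f'(t)g(t)) dt = 0 for every smooth π-periodic function g : ℝ → ℝ if and only if f is constant. (Equivalently: the kernel of the pre-symplectic form ω(U_f, V_g) = ½∫₀^π (fg' − f'g) dt consists exactly of the constant functions f.) -/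
/-!
Integration by parts over a full period has no boundary terms, so the pairing of `f` and `g` equals
`-2 ∫ f' g`. It vanishes for all `g` when `f' = 0`; conversely, the choice `g = f'` gives
`∫ f' ^ 2 = 0`, which forces `f' = 0`.
-/

open Real

open Function MeasureTheory

theorem periodic_deriv {𝕜 F : Type*} [NontriviallyNormedField 𝕜] [NormedAddCommGroup F]
    [NormedSpace 𝕜 F] {f : 𝕜 → F} {c : 𝕜} (hf : Periodic f c) : Periodic (deriv f) c := by
  intro t
  rw [← deriv_comp_add_const, hf.funext]

theorem eq_zero_of_periodic_of_intervalIntegral_eq_zero {h : ℝ → ℝ} {T : ℝ} (hT : 0 < T)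
    (hper : Periodic h T) (hcont : Continuous h) (hnonneg : ∀ t, 0 ≤ h t)
    (hint : ∫ t in (0 : ℝ)..T, h t = 0) : h = 0 := by
  funext t
  by_contra hne
  have hpos : 0 < ∫ s in t..(t + T), h s :=
    intervalIntegral.integral_pos (lt_add_of_pos_right t hT) hcont.continuousOn
      (fun s _ ↦ hnonneg s)
      ⟨t, Set.left_mem_Icc.2 (le_add_of_nonneg_right hT.le), (hnonneg t).lt_of_ne' hne⟩
  rw [hper.intervalIntegral_add_eq t 0, zero_add, hint] at hpos
  exact hpos.false

section IntegrationByParts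

variable {A : Type*} [NormedRing A] [NormedAlgebra ℝ A] [CompleteSpace A]

theorem intervalIntegral_mul_deriv_sub_deriv_mul {a b : ℝ} {u v u' v' : ℝ → A}
    (hu : ∀ t ∈ Set.uIcc a b, HasDerivAt u (u' t) t)
    (hv : ∀ t ∈ Set.uIcc a b, HasDerivAt v (v' t) t)
    (hu' : IntervalIntegrable u' volume a b) (hv' : IntervalIntegrable v' volume a b)
    (hab : u a * v a = u b * v b) :
    ∫ t in a..b, (u t * v' t - u' t * v t) = -2 * ∫ t in a..b, u' t * v t := by
  have u_cont : ContinuousOn u (Set.uIcc a b) := HasDerivAt.continuousOn hu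
  have v_cont : ContinuousOn v (Set.uIcc a b) := HasDerivAt.continuousOn hv
  rw [intervalIntegral.integral_sub (hv'.continuousOn_mul u_cont) (hu'.mul_continuousOn v_cont),
    intervalIntegral.integral_mul_deriv_eq_deriv_mul hu hv hu' hv', hab]
  noncomm_ring

theorem intervalIntegral_mul_deriv_sub_deriv_mul_of_periodic {f g : ℝ → A} {T : ℝ}
    (hf : ContDiff ℝ 1 f) (hg : ContDiff ℝ 1 g) (hfper : Periodic f T) (hgper : Periodic g T) :
    ∫ t in (0 : ℝ)..T, (f t * deriv g t - deriv f t * g t) =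
      -2 * ∫ t in (0 : ℝ)..T, deriv f t * g t :=
  intervalIntegral_mul_deriv_sub_deriv_mul
    (fun t _ ↦ (hf.differentiable_one t).hasDerivAt)
    (fun t _ ↦ (hg.differentiable_one t).hasDerivAt)
    (hf.continuous_deriv_one.intervalIntegrable 0 T)
    (hg.continuous_deriv_one.intervalIntegrable 0 T) (by rw [hfper.eq, hgper.eq])

end IntegrationByParts

theorem deriv_eq_zero_of_integral_mul_deriv_deriv_sub_eq_zero {f : ℝ → ℝ} {T : ℝ} (hT : 0 < T)
    (hf : ContDiff ℝ 2 f) (hfper : Periodic f T)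
    (hker : ∫ t in (0 : ℝ)..T, (f t * deriv (deriv f) t - deriv f t * deriv f t) = 0) :
    deriv f = 0 := by
  have hf' : ContDiff ℝ 1 (deriv f) := ContDiff.deriv' hf
  have hf'per : Periodic (deriv f) T := periodic_deriv hfper
  have hsq_integral : ∫ t in (0 : ℝ)..T, deriv f t * deriv f t = 0 := by
    rw [intervalIntegral_mul_deriv_sub_deriv_mul_of_periodic (hf.of_le one_le_two) hf' hfper
      hf'per] at hker
    linarith
  have hsq : deriv f * deriv f = 0 :=
    eq_zero_of_periodic_of_intervalIntegral_eq_zero hT (hf'per.mul hf'per)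
      (hf'.continuous.mul hf'.continuous) (fun t ↦ mul_self_nonneg (deriv f t)) hsq_integral
  exact funext fun t ↦ mul_self_eq_zero.1 (congrFun hsq t)

theorem omega_kernel_general {n : WithTop ℕ∞} {T : ℝ} (hn : 1 ≤ n) (hT : 0 < T) {f : ℝ → ℝ}
    (hf : ContDiff ℝ (n + 1) f) (hfper : Periodic f T) :
    (∀ g : ℝ → ℝ, ContDiff ℝ n g → Periodic g T →
      ∫ t in (0 : ℝ)..T, (f t * deriv g t - deriv f t * g t) = 0) ↔
    ∃ C : ℝ, ∀ t, f t = C := by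
  have hf2 : ContDiff ℝ 2 f := hf.of_le (one_add_one_eq_two.symm.trans_le (by gcongr))
  constructor
  · intro hker
    have hderiv : deriv f = 0 :=
      deriv_eq_zero_of_integral_mul_deriv_deriv_sub_eq_zero hT hf2 hfper
        (hker (deriv f) hf.deriv' (periodic_deriv hfper))
    exact ⟨f 0, fun t ↦
      is_const_of_deriv_eq_zero (hf2.differentiable two_ne_zero) (congrFun hderiv) t 0⟩
  · rintro ⟨C, hC⟩ g hg hgper
    rw [intervalIntegral_mul_deriv_sub_deriv_mul_of_periodic (hf2.of_le one_le_two) (hg.of_le hn)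
      hfper hgper, funext hC]
    simp only [deriv_const, zero_mul, intervalIntegral.integral_zero, mul_zero]

/-- The kernel of Pinkall's pre-symplectic form `ω(U_f, V_g) = ½∫₀^π (fg' − f'g) dt`
consists exactly of the constant functions: a smooth `π`-periodic `f` pairs to zero
with every smooth `π`-periodic `g` iff `f` is constant. -/
theorem omega_kernel (f : ℝ → ℝ) (hf : ContDiff ℝ (⊤ : ℕ∞) f)
    (hfper : ∀ t, f (t + π) = f t) :
    (∀ g : ℝ → ℝ, ContDiff ℝ (⊤ : ℕ∞) g → (∀ t, g (t + π) = g t) →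
      ∫ t in (0:ℝ)..π, (f t * deriv g t - deriv f t * g t) = 0) ↔
    (∃ C : ℝ, ∀ t, f t = C) :=
  omega_kernel_general (n := (⊤ : ℕ∞)) (by simp) pi_pos hf hfper
end

section
/- Let Γ : ℝ × ℝ → ℝ² and p : ℝ × ℝ → ℝ be smooth, where Γ = Γ(s, t) and all primes denote t-derivatives. Suppose that for all (s, t): [Γ, ∂ₜΓ] = 1, ∂ₜ²Γ = p·Γ, and ∂ₛΓ = −½(∂ₜp)·Γ + p·∂ₜΓ. Then p satisfies the Korteweg–de Vries equation: ∂ₛp = −½∂ₜ³p + 3p·∂ₜp for all (s, t). -/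
/-!
The equation is the compatibility condition `∂ₛ∂ₜ²Γ = ∂ₜ²∂ₛΓ` of the Hill equation `∂ₜ²Γ = pΓ` with
the flow `∂ₛΓ = U_p`. The left side is `(∂ₛp) Γ + p U_p`. On the right, the Hill equation lets every
`t`-derivative be expressed in the frame `(Γ, ∂ₜΓ)`, and `U_p` is made so that the `∂ₜΓ`-component
of `∂ₜ²U_p - p U_p` vanishes: `∂ₜ²U_p = (-½ ∂ₜ³p + 3p ∂ₜp) Γ + p U_p`. Since
`[Γ, ∂ₜΓ] = 1`, `Γ` has no zeros, so the coefficients of `Γ` agree.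
-/

open Real

open Function Topology

section MixedPartials

variable {𝕜 E : Type*} [NontriviallyNormedField 𝕜] [NormedAddCommGroup E] [NormedSpace 𝕜 E]
  {f : 𝕜 → 𝕜 → E} {s t : 𝕜} {m n : WithTop ℕ∞}

lemma hasDerivAt_left_of_hasFDerivAt_uncurry {f' : 𝕜 × 𝕜 →L[𝕜] E}
    (hf : HasFDerivAt (uncurry f) f' (s, t)) : HasDerivAt (fun s' => f s' t) (f' (1, 0)) s :=
  hf.comp_hasDerivAt (f := fun s' => (s', t)) s ((hasDerivAt_id s).prodMk (hasDerivAt_const s t))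

lemma hasDerivAt_right_of_hasFDerivAt_uncurry {f' : 𝕜 × 𝕜 →L[𝕜] E}
    (hf : HasFDerivAt (uncurry f) f' (s, t)) : HasDerivAt (f s) (f' (0, 1)) t :=
  hf.comp_hasDerivAt t ((hasDerivAt_const t s).prodMk (hasDerivAt_id t))

lemma contDiff_uncurry_deriv (hf : ContDiff 𝕜 n (uncurry f)) (hmn : m + 1 ≤ n) :
    ContDiff 𝕜 m (uncurry fun s => deriv (f s)) :=
  ContDiff.fderiv_apply (f := fun q : 𝕜 × 𝕜 => f q.1)
    (hf.comp (contDiff_fst.fst.prodMk contDiff_snd)) contDiff_snd contDiff_const hmn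

lemma deriv_deriv_comm (hf : ContDiffAt 𝕜 n (uncurry f) (s, t)) (hn : minSmoothness 𝕜 2 ≤ n) :
    deriv (fun s' => deriv (f s') t) s = deriv (fun t' => deriv (fun s' => f s' t') s) t := by
  have hf₂ : ContDiffAt 𝕜 2 (uncurry f) (s, t) := hf.of_le (le_minSmoothness.trans hn)
  have hdiff : ∀ᶠ q in 𝓝 (s, t), DifferentiableAt 𝕜 (uncurry f) q :=
    (hf₂.eventually (by simp)).mono fun q hq => hq.differentiableAt two_ne_zero
  have hright : (fun s' => deriv (f s') t) =ᶠ[𝓝 s]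
      fun s' => fderiv 𝕜 (uncurry f) (s', t) (0, 1) :=
    ((Continuous.prodMk_left t).tendsto s |>.eventually hdiff).mono fun s' h =>
      (hasDerivAt_right_of_hasFDerivAt_uncurry h.hasFDerivAt).deriv
  have hleft : (fun t' => deriv (fun s' => f s' t') s) =ᶠ[𝓝 t]
      fun t' => fderiv 𝕜 (uncurry f) (s, t') (1, 0) :=
    ((Continuous.prodMk_right s).tendsto t |>.eventually hdiff).mono fun t' h =>
      (hasDerivAt_left_of_hasFDerivAt_uncurry h.hasFDerivAt).deriv
  have hsecond : HasFDerivAt (uncurry fun s' t' => fderiv 𝕜 (uncurry f) (s', t'))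
      (fderiv 𝕜 (fderiv 𝕜 (uncurry f)) (s, t)) (s, t) :=
    ((hf₂.fderiv_right (m := 1) le_rfl).differentiableAt one_ne_zero).hasFDerivAt
  calc deriv (fun s' => deriv (f s') t) s
      = fderiv 𝕜 (fderiv 𝕜 (uncurry f)) (s, t) (1, 0) (0, 1) := by
        rw [hright.deriv_eq]
        simpa using ((hasDerivAt_left_of_hasFDerivAt_uncurry hsecond).clm_apply
          (hasDerivAt_const s ((0, 1) : 𝕜 × 𝕜))).deriv
    _ = fderiv 𝕜 (fderiv 𝕜 (uncurry f)) (s, t) (0, 1) (1, 0) := hf.isSymmSndFDerivAt hn _ _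
    _ = deriv (fun t' => deriv (fun s' => f s' t') s) t := by
        rw [hleft.deriv_eq]
        simpa using ((hasDerivAt_right_of_hasFDerivAt_uncurry hsecond).clm_apply
          (hasDerivAt_const t ((1, 0) : 𝕜 × 𝕜))).deriv.symm

lemma deriv_deriv_deriv_comm (hf : ContDiff 𝕜 n (uncurry f)) (hn : minSmoothness 𝕜 3 ≤ n) :
    deriv (fun s' => deriv (deriv (f s')) t) s =
      deriv (deriv fun t' => deriv (fun s' => f s' t') s) t := by
  have hn' : minSmoothness 𝕜 2 + 1 ≤ n := by
    rwa [← minSmoothness_add, two_add_one_eq_three]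
  have hcomm : (fun t' => deriv (fun s' => deriv (f s') t') s) =
      deriv fun t' => deriv (fun s' => f s' t') s :=
    funext fun _ => deriv_deriv_comm hf.contDiffAt (le_self_add.trans hn')
  rw [← hcomm]
  exact deriv_deriv_comm (contDiff_uncurry_deriv hf hn').contDiffAt le_rfl

end MixedPartials

/-- Pinkall's vector field `U_q = -½ q' γ + q γ'` along the curve `γ`, the Hamiltonian vector field
of `∫ q dt` on centro-affine curves. The potential `q` is an independent argument: it is not
recovered from `γ` through the Hill equation `γ'' = q γ`. -/
noncomputable def pinkallField {𝕜 E : Type*} [NontriviallyNormedField 𝕜] [NormedAddCommGroup E]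
    [NormedSpace 𝕜 E] (q : 𝕜 → 𝕜) (γ : 𝕜 → E) (t : 𝕜) : E :=
  (-(1 / 2) * deriv q t) • γ t + q t • deriv γ t

section HillEquation

lemma hasDerivAt_smul_add_smul_deriv {𝕜 E : Type*} [NontriviallyNormedField 𝕜]
    [NormedAddCommGroup E] [NormedSpace 𝕜 E] {γ : 𝕜 → E} {a b : 𝕜 → 𝕜} {a' b' c t : 𝕜}
    (hγ : DifferentiableAt 𝕜 γ t) (hHill : HasDerivAt (deriv γ) (c • γ t) t)
    (ha : HasDerivAt a a' t) (hb : HasDerivAt b b' t) :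
    HasDerivAt (fun t => a t • γ t + b t • deriv γ t)
      ((a' + c * b t) • γ t + (a t + b') • deriv γ t) t := by
  convert (ha.fun_smul hγ.hasDerivAt).fun_add (hb.fun_smul hHill) using 1
  module

variable {𝕜 E : Type*} [RCLike 𝕜] [NormedAddCommGroup E] [NormedSpace 𝕜 E]
  {γ : 𝕜 → E} {q : 𝕜 → 𝕜}

lemma deriv_pinkallField (hγ : Differentiable 𝕜 γ)
    (hHill : ∀ t, HasDerivAt (deriv γ) (q t • γ t) t) (hq : ContDiff 𝕜 2 q) :
    deriv (pinkallField q γ) = fun t =>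
      (-(1 / 2) * deriv (deriv q) t + q t ^ 2) • γ t + (1 / 2 * deriv q t) • deriv γ t := by
  funext t
  have hq₁ : HasDerivAt q (deriv q t) t := (hq.differentiable two_ne_zero t).hasDerivAt
  have hq₂ : HasDerivAt (deriv q) (deriv (deriv q) t) t :=
    (hq.differentiable_deriv_two t).hasDerivAt
  refine (hasDerivAt_smul_add_smul_deriv (hγ t) (hHill t)
    (hq₂.const_mul (-(1 / 2))) hq₁).deriv.trans ?_
  module

lemma deriv_deriv_pinkallField (hγ : Differentiable 𝕜 γ)
    (hHill : ∀ t, HasDerivAt (deriv γ) (q t • γ t) t) (hq : ContDiff 𝕜 3 q) (t : 𝕜) :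
    deriv (deriv (pinkallField q γ)) t =
      (-(1 / 2) * deriv (deriv (deriv q)) t + 3 * q t * deriv q t) • γ t +
        q t • pinkallField q γ t := by
  have hq' : ContDiff 𝕜 2 (deriv q) := ContDiff.deriv' (by rwa [two_add_one_eq_three])
  have hq₁ : HasDerivAt q (deriv q t) t := (hq.differentiable three_ne_zero t).hasDerivAt
  have hq₂ : HasDerivAt (deriv q) (deriv (deriv q) t) t :=
    (hq'.differentiable two_ne_zero t).hasDerivAt
  have hq₃ : HasDerivAt (deriv (deriv q)) (deriv (deriv (deriv q)) t) t :=
    (hq'.differentiable_deriv_two t).hasDerivAt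
  rw [deriv_pinkallField hγ hHill (hq.of_le (by norm_num))]
  refine (hasDerivAt_smul_add_smul_deriv (hγ t) (hHill t)
    ((hq₃.const_mul (-(1 / 2))).fun_add (hq₁.fun_pow 2)) (hq₂.const_mul (1 / 2))).deriv.trans ?_
  rw [pinkallField]
  module

end HillEquation

lemma ne_zero_of_det2_ne_zero {u v : ℝ × ℝ} (h : det2 u v ≠ 0) : u ≠ 0 := by
  rintro rfl
  simp [det2] at h

theorem kdv_evolution_general {𝕜 E : Type*} [RCLike 𝕜] [NormedAddCommGroup E] [NormedSpace 𝕜 E]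
    {Γ : 𝕜 → 𝕜 → E} {p : 𝕜 → 𝕜 → 𝕜} (hΓ : ContDiff 𝕜 3 (uncurry Γ)) (hp : ContDiff 𝕜 3 (uncurry p))
    (hHill : ∀ s t, deriv (deriv (Γ s)) t = p s t • Γ s t)
    (hflow : ∀ s t, deriv (fun s' => Γ s' t) s = pinkallField (p s) (Γ s) t)
    {s t : 𝕜} (hne : Γ s t ≠ 0) :
    deriv (fun s' => p s' t) s =
      -(1 / 2) * deriv (deriv (deriv (p s))) t + 3 * p s t * deriv (p s) t := by
  have hΓs : ContDiff 𝕜 3 (Γ s) := hΓ.comp (contDiff_prodMk_right s)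
  have hHill' (t : 𝕜) : HasDerivAt (deriv (Γ s)) (p s t • Γ s t) t :=
    hHill s t ▸ ((hΓs.of_le (by norm_num)).differentiable_deriv_two t).hasDerivAt
  have hΓ_s : DifferentiableAt 𝕜 (fun s' => Γ s' t) s :=
    (hΓ.comp (contDiff_prodMk_left t)).differentiable three_ne_zero s
  have hp_s : DifferentiableAt 𝕜 (fun s' => p s' t) s :=
    (hp.comp (contDiff_prodMk_left t)).differentiable three_ne_zero s
  refine smul_left_injective 𝕜 hne (add_right_cancel (b := p s t • pinkallField (p s) (Γ s) t) ?_)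
  calc deriv (fun s' => p s' t) s • Γ s t + p s t • pinkallField (p s) (Γ s) t
      = deriv (fun s' => p s' t • Γ s' t) s := by rw [deriv_fun_smul hp_s hΓ_s, hflow, add_comm]
    _ = deriv (fun s' => deriv (deriv (Γ s')) t) s := by simp only [hHill]
    _ = deriv (deriv fun t' => deriv (fun s' => Γ s' t') s) t :=
        deriv_deriv_deriv_comm hΓ (by simp)
    _ = deriv (deriv (pinkallField (p s) (Γ s))) t := by simp only [hflow]
    _ = _ := deriv_deriv_pinkallField (hΓs.differentiable three_ne_zero) hHill'
        (hp.comp (contDiff_prodMk_right s)) t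

/-- If a family of centro-affine curves `Γ(s, ·)` with Hill potentials `p(s, ·)`
evolves by Pinkall's Hamiltonian vector field `U_p = −½p'Γ + pΓ'`, then the
potential `p` evolves by the Korteweg–de Vries equation
`∂ₛp = −½∂ₜ³p + 3p ∂ₜp`. -/
theorem kdv_evolution (Γ : ℝ → ℝ → ℝ × ℝ) (p : ℝ → ℝ → ℝ)
    (hΓ : ContDiff ℝ (⊤ : ℕ∞) (fun q : ℝ × ℝ => Γ q.1 q.2))
    (hp : ContDiff ℝ (⊤ : ℕ∞) (fun q : ℝ × ℝ => p q.1 q.2))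
    (hdet : ∀ s t, det2 (Γ s t) (deriv (Γ s) t) = 1)
    (hHill : ∀ s t, deriv (deriv (Γ s)) t = p s t • Γ s t)
    (hflow : ∀ s t, deriv (fun s' => Γ s' t) s =
      (-(1/2) * deriv (p s) t) • Γ s t + p s t • deriv (Γ s) t) :
    ∀ s t, deriv (fun s' => p s' t) s =
      -(1/2) * deriv (deriv (deriv (p s))) t + 3 * p s t * deriv (p s) t := by
  intro s t
  have hne : Γ s t ≠ 0 := ne_zero_of_det2_ne_zero (by rw [hdet s t]; exact one_ne_zero)
  exact kdv_evolution_general (contDiff_infty.1 hΓ 3) (contDiff_infty.1 hp 3) hHill hflow hne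
end

section
/- Let p : ℝ → ℝ be smooth and π-periodic, and let U : ℝ → ℝ² be smooth with U(t + π) = −U(t) for all t. Then ∫₀^π ([U'(t), V'(t)] + p(t)[U(t), V(t)]) dt = 0 for every smooth V : ℝ → ℝ² with V(t + π) = −V(t) for all t, if and only if U''(t) = p(t)U(t) for all t. (The kernel of Ω consists of the solutions of the Hill equation U'' = pU.) -/
/-!
Put `W = U'' - pU`, which is again anti-periodic. Since `[U', V]' = [U'', V] + [U', V']` and
`[U', V]` is periodic, integration by parts over a period gives `Ω(U, V) = -∫ [W, V]`, so `W = 0`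
implies `Ω(U, ·) = 0`. Conversely, no bump functions are needed: for each constant vector `v`, the
field `V = [W, v] v` is itself an admissible test field, and `[W, V] = [W, v]²` is continuous,
nonnegative and periodic, hence vanishes identically once its integral over a period does. As `v`
is arbitrary and the bracket is nondegenerate, `W = 0`.
-/

open Real

open Function

lemma antiperiodic_deriv {𝕜 E : Type*} [NontriviallyNormedField 𝕜] [NormedAddCommGroup E]
    [NormedSpace 𝕜 E] {U : 𝕜 → E} {T : 𝕜} (hU : Antiperiodic U T) :
    Antiperiodic (deriv U) T := fun t ↦ by
  rw [← deriv_comp_add_const, hU.funext, deriv.neg]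

lemma eq_zero_of_periodic_of_nonneg_of_integral_eq_zero {f : ℝ → ℝ} {T : ℝ} (hT : 0 < T)
    (hf : Continuous f) (hper : Periodic f T) (hnonneg : ∀ t, 0 ≤ f t)
    (hint : ∫ t in (0 : ℝ)..T, f t = 0) (t : ℝ) : f t = 0 := by
  -- Starting the period at `t` makes `t` an endpoint, so no reduction modulo `T` is needed.
  have hshift : ∫ s in t..t + T, f s = 0 := by
    rw [hper.intervalIntegral_add_eq t 0, zero_add, hint]
  by_contra hne
  have hpos : 0 < ∫ s in t..t + T, f s :=
    intervalIntegral.integral_pos (by linarith) hf.continuousOn (fun s _ ↦ hnonneg s)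
      ⟨t, Set.left_mem_Icc.2 (by linarith), (hnonneg t).lt_of_ne' hne⟩
  exact hpos.ne' hshift

section HillForm

variable {E F : Type*} [NormedAddCommGroup E] [NormedSpace ℝ E] [NormedAddCommGroup F]
  [NormedSpace ℝ F] (B : E →L[ℝ] F →L[ℝ] ℝ) {p : ℝ → ℝ} {T : ℝ} {U : ℝ → E} {V : ℝ → F}

/-- The failure `U'' - pU` of `U` to solve the Hill equation with potential `p`. -/
noncomputable def hillDefect (p : ℝ → ℝ) (U : ℝ → E) (t : ℝ) : E :=
  deriv (deriv U) t - p t • U t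

/-- The form `Ω(U, V) = ∫₀ᵀ ([U', V'] + p[U, V]) dt`, with an arbitrary continuous bilinear
pairing `B` as the bracket and an arbitrary `T` in place of `π`. -/
noncomputable def hillForm (p : ℝ → ℝ) (T : ℝ) (U : ℝ → E) (V : ℝ → F) : ℝ :=
  ∫ t in (0 : ℝ)..T, (B (deriv U t) (deriv V t) + p t * B (U t) (V t))

lemma contDiff_hillDefect {n : WithTop ℕ∞} (hp : ContDiff ℝ n p) (hU : ContDiff ℝ (n + 2) U) :
    ContDiff ℝ n (hillDefect p U) := by
  have hU'' : ContDiff ℝ n (deriv (deriv U)) := by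
    rw [← one_add_one_eq_two, ← add_assoc] at hU
    exact hU.deriv'.deriv'
  exact hU''.sub (hp.smul (hU.of_le le_self_add))

lemma antiperiodic_hillDefect (hp : Periodic p T) (hU : Antiperiodic U T) :
    Antiperiodic (hillDefect p U) T := fun t ↦ by
  simp only [hillDefect, antiperiodic_deriv (antiperiodic_deriv hU) t, hp t, hU t, smul_neg,
    neg_sub_neg, neg_sub]

lemma intervalIntegrable_bilin {X : ℝ → E} (hX : Continuous X) (hV : Continuous V) (a b : ℝ) :
    IntervalIntegrable (fun t ↦ B (X t) (V t)) MeasureTheory.volume a b :=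
  Continuous.intervalIntegrable (by fun_prop) a b

lemma integral_bilin_deriv_add_eq_zero {X : ℝ → E} (hX : ContDiff ℝ 1 X)
    (hXT : Antiperiodic X T) (hV : ContDiff ℝ 1 V) (hVT : Antiperiodic V T) :
    ∫ t in (0 : ℝ)..T, (B (X t) (deriv V t) + B (deriv X t) (V t)) = 0 := by
  have hderiv (t : ℝ) : HasDerivAt (fun s ↦ B (X s) (V s))
      (B (X t) (deriv V t) + B (deriv X t) (V t)) t :=
    B.hasDerivAt_of_bilinear (fun _ ↦ (hX.differentiable one_ne_zero t).hasDerivAt)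
      (fun _ ↦ (hV.differentiable one_ne_zero t).hasDerivAt)
  rw [intervalIntegral.integral_eq_sub_of_hasDerivAt (fun t _ ↦ hderiv t)
    ((intervalIntegrable_bilin B hX.continuous hV.continuous_deriv_one _ _).add
      (intervalIntegrable_bilin B hX.continuous_deriv_one hV.continuous _ _))]
  simp [hXT.eq, hVT.eq]

lemma hillForm_eq_neg_integral (hp : Continuous p) (hU : ContDiff ℝ 2 U)
    (hUT : Antiperiodic U T) (hV : ContDiff ℝ 1 V) (hVT : Antiperiodic V T) :
    hillForm B p T U V = -∫ t in (0 : ℝ)..T, B (hillDefect p U t) (V t) := by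
  have hU' : ContDiff ℝ 1 (deriv U) := ContDiff.deriv' (by simpa [one_add_one_eq_two] using hU)
  have hW : Continuous (hillDefect p U) :=
    (contDiff_hillDefect (contDiff_zero.2 hp) (by simpa using hU)).continuous
  calc hillForm B p T U V
      = ∫ t in (0 : ℝ)..T, ((B (deriv U t) (deriv V t) + B (deriv (deriv U) t) (V t)) -
          B (hillDefect p U t) (V t)) := by
        refine intervalIntegral.integral_congr fun t _ ↦ ?_
        simp only [hillDefect, map_sub, map_smul, sub_apply, smul_apply, smul_eq_mul]
        ring
    _ = -∫ t in (0 : ℝ)..T, B (hillDefect p U t) (V t) := by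
        rw [intervalIntegral.integral_sub
          ((intervalIntegrable_bilin B hU'.continuous hV.continuous_deriv_one _ _).add
            (intervalIntegrable_bilin B hU'.continuous_deriv_one hV.continuous _ _))
          (intervalIntegrable_bilin B hW hV.continuous _ _),
          integral_bilin_deriv_add_eq_zero B hU' (antiperiodic_deriv hUT) hV hVT, zero_sub]

lemma bilin_eq_zero_of_forall_integral_eq_zero {n : WithTop ℕ∞} (hT : 0 < T) {W : ℝ → E}
    (hW : ContDiff ℝ n W) (hWT : Antiperiodic W T)
    (h : ∀ V : ℝ → F, ContDiff ℝ n V → Antiperiodic V T → ∫ t in (0 : ℝ)..T, B (W t) (V t) = 0)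
    (t : ℝ) (v : F) : B (W t) v = 0 := by
  have hφ : ContDiff ℝ n fun s ↦ B (W s) v := by fun_prop
  have hφT : Antiperiodic (fun s ↦ B (W s) v) T := fun s ↦ by simp [hWT s]
  have hint : ∫ s in (0 : ℝ)..T, B (W s) v * B (W s) v = 0 := by
    simpa using h (fun s ↦ B (W s) v • v) (hφ.smul contDiff_const) fun s ↦ by simp [hWT s]
  exact mul_self_eq_zero.1 <| eq_zero_of_periodic_of_nonneg_of_integral_eq_zero hT
    (hφ.continuous.mul hφ.continuous) (hφT.mul hφT) (fun s ↦ mul_self_nonneg _) hint t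

theorem Omega_kernel_general {n : WithTop ℕ∞} (hn : 1 ≤ n) (hB : Injective B) (hT : 0 < T)
    (hp : ContDiff ℝ n p) (hpT : Periodic p T) (hU : ContDiff ℝ (n + 2) U)
    (hUT : Antiperiodic U T) :
    (∀ V : ℝ → F, ContDiff ℝ n V → Antiperiodic V T → hillForm B p T U V = 0) ↔
      ∀ t, deriv (deriv U) t = p t • U t := by
  have hparts {V : ℝ → F} (hV : ContDiff ℝ n V) (hVT : Antiperiodic V T) :=
    hillForm_eq_neg_integral B hp.continuous (hU.of_le le_add_self) hUT (hV.of_le hn) hVT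
  constructor
  · intro h t
    have hW : B (hillDefect p U t) = 0 := ContinuousLinearMap.ext <|
      bilin_eq_zero_of_forall_integral_eq_zero B hT (contDiff_hillDefect hp hU)
        (antiperiodic_hillDefect hpT hUT)
        (fun V hV hVT ↦ neg_eq_zero.1 <| (hparts hV hVT).symm.trans (h V hV hVT)) t
    exact sub_eq_zero.1 ((map_eq_zero_iff B hB).1 hW)
  · intro h V hV hVT
    have hW (t : ℝ) : hillDefect p U t = 0 := sub_eq_zero.2 (h t)
    simp [hparts hV hVT, hW]

end HillForm

/-- The bracket `det2` as a continuous bilinear map, the form in which it enters `hillForm`. -/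
noncomputable def det2L : ℝ × ℝ →L[ℝ] ℝ × ℝ →L[ℝ] ℝ :=
  (ContinuousLinearMap.mul ℝ ℝ).bilinearComp (.fst ℝ ℝ ℝ) (.snd ℝ ℝ ℝ) -
    (ContinuousLinearMap.mul ℝ ℝ).bilinearComp (.snd ℝ ℝ ℝ) (.fst ℝ ℝ ℝ)

lemma det2L_apply (u v : ℝ × ℝ) : det2L u v = det2 u v := rfl

lemma det2L_injective : Injective det2L := by
  refine (injective_iff_map_eq_zero det2L).2 fun u hu ↦ ?_
  have hdet (v : ℝ × ℝ) : det2 u v = 0 := by rw [← det2L_apply, hu, zero_apply]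
  exact Prod.ext (by simpa [det2] using hdet (0, 1)) (by simpa [det2] using hdet (1, 0))

/-- The kernel of the second pre-symplectic form
`Ω(U, V) = ∫₀^π ([U', V'] + p[U, V]) dt` on π-anti-periodic fields consists of
the solutions of the Hill equation `U'' = pU`. -/
theorem Omega_kernel (p : ℝ → ℝ) (hp : ContDiff ℝ (⊤ : ℕ∞) p)
    (hpper : ∀ t, p (t + π) = p t)
    (U : ℝ → ℝ × ℝ) (hU : ContDiff ℝ (⊤ : ℕ∞) U) (hUa : ∀ t, U (t + π) = -U t) :
    (∀ V : ℝ → ℝ × ℝ, ContDiff ℝ (⊤ : ℕ∞) V → (∀ t, V (t + π) = -V t) →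
      ∫ t in (0:ℝ)..π, (det2 (deriv U t) (deriv V t) + p t * det2 (U t) (V t)) = 0) ↔
    (∀ t, deriv (deriv U) t = p t • U t) :=
  Omega_kernel_general det2L (by simp) det2L_injective pi_pos hp hpper (hU.of_le le_rfl) hUa
end

section
/- Let γ : ℝ → ℝ be smooth with γ'(t) > 0 for all t, and set Γ₁ := (γ')^{−1/2}, Γ₂ := (γ')^{−1/2}·γ. For smooth u, v : ℝ → ℝ define U := (−½u'Γ₁³, −½u'Γ₁²Γ₂ + uΓ₁) and V := (−½v'Γ₁³, −½v'Γ₁²Γ₂ + vΓ₁). Then for all t: [U(t), V(t)] = ½·(u(t)v'(t) − u'(t)v(t))/γ'(t)². (Hence the centro-affine form ω equals ½ω', where ω'(u, v) = ∫ (uv' − u'v)/(γ')² dt.) -/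
/-!
The vectors `U` and `V` are combinations of `Γ` and the constant vector `e₂ = (0, 1)`, namely
`U = -½u'Γ₁² Γ + uΓ₁ e₂`, and `[Γ, e₂] = Γ₁`. Since the determinant is bilinear and alternating,
`[U, V] = ½Γ₁⁴ (uv' - u'v)`, and `Γ₁⁴ = (γ')⁻²`.
-/

open Real

/-- The lift `Γ = ((γ')^{-1/2}, (γ')^{-1/2}γ)` to `ℝ²` of the projective curve with affine
chart `γ`. Where `γ' ≤ 0` it takes the junk value `(0, 0)`. -/
noncomputable def centroAffineLift (γ : ℝ → ℝ) (t : ℝ) : ℝ × ℝ :=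
  ((√(deriv γ t))⁻¹, (√(deriv γ t))⁻¹ * γ t)

/-- The variation of the centro-affine curve `Γ` induced by a variation `u` of `γ`. The formula is
the derivative at `ε = 0` of the lift of `γ + εu`, written in terms of `Γ`. -/
noncomputable def inducedVariation (Γ : ℝ → ℝ × ℝ) (u : ℝ → ℝ) (t : ℝ) : ℝ × ℝ :=
  (-(1 / 2) * deriv u t * (Γ t).1 ^ 3,
    -(1 / 2) * deriv u t * (Γ t).1 ^ 2 * (Γ t).2 + u t * (Γ t).1)

theorem det2_smul_add_smul (a b c d : ℝ) (x y : ℝ × ℝ) :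
    det2 (a • x + b • y) (c • x + d • y) = (a * d - b * c) * det2 x y := by
  simp only [det2, Prod.fst_add, Prod.snd_add, Prod.smul_fst, Prod.smul_snd, smul_eq_mul]
  ring

theorem det2_zero_one_right (x : ℝ × ℝ) : det2 x (0, 1) = x.1 := by
  simp [det2]

theorem inducedVariation_eq_smul_add_smul (Γ : ℝ → ℝ × ℝ) (u : ℝ → ℝ) (t : ℝ) :
    inducedVariation Γ u t =
      (-(1 / 2) * deriv u t * (Γ t).1 ^ 2) • Γ t + (u t * (Γ t).1) • ((0, 1) : ℝ × ℝ) := by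
  ext <;> simp only [inducedVariation, Prod.fst_add, Prod.snd_add, Prod.smul_fst, Prod.smul_snd,
    smul_eq_mul] <;> ring

theorem det2_inducedVariation (Γ : ℝ → ℝ × ℝ) (u v : ℝ → ℝ) (t : ℝ) :
    det2 (inducedVariation Γ u t) (inducedVariation Γ v t) =
      (1 / 2) * (u t * deriv v t - deriv u t * v t) * (Γ t).1 ^ 4 := by
  rw [inducedVariation_eq_smul_add_smul, inducedVariation_eq_smul_add_smul, det2_smul_add_smul,
    det2_zero_one_right]
  ring

theorem inv_sqrt_pow_four {x : ℝ} (hx : 0 ≤ x) : (√x)⁻¹ ^ 4 = (x ^ 2)⁻¹ := by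
  rw [inv_pow, pow_mul (√x) 2 2, sq_sqrt hx]

theorem omega_is_half_omega'_general {γ u v : ℝ → ℝ} {γ' u' v' t : ℝ}
    (hγ : HasDerivAt γ γ' t) (hpos : 0 < γ') (hu : HasDerivAt u u' t) (hv : HasDerivAt v v' t) :
    det2 (inducedVariation (centroAffineLift γ) u t) (inducedVariation (centroAffineLift γ) v t) =
      (1 / 2) * (u t * v' - u' * v t) / γ' ^ 2 := by
  have hΓ₁ : (centroAffineLift γ t).1 ^ 4 = (γ' ^ 2)⁻¹ := by
    rw [centroAffineLift, hγ.deriv, inv_sqrt_pow_four hpos.le]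
  rw [det2_inducedVariation, hΓ₁, hu.deriv, hv.deriv, ← div_eq_mul_inv]

/-- In terms of the projective curve `γ` with lift `Γ = ((γ')^{-1/2}, (γ')^{-1/2}γ)`,
the centro-affine symplectic density satisfies
`[U, V] = ½ (uv' − u'v)/(γ')²`, i.e. `ω = ½ω'`. -/
theorem omega_is_half_omega' (γ : ℝ → ℝ) (hγ : ContDiff ℝ (⊤ : ℕ∞) γ)
    (hpos : ∀ t, 0 < deriv γ t)
    (u v : ℝ → ℝ) (hu : ContDiff ℝ (⊤ : ℕ∞) u) (hv : ContDiff ℝ (⊤ : ℕ∞) v)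
    (Γ₁ Γ₂ : ℝ → ℝ)
    (hΓ₁ : ∀ t, Γ₁ t = (Real.sqrt (deriv γ t))⁻¹)
    (hΓ₂ : ∀ t, Γ₂ t = (Real.sqrt (deriv γ t))⁻¹ * γ t)
    (U V : ℝ → ℝ × ℝ)
    (hU : ∀ t, U t = (-(1/2) * deriv u t * (Γ₁ t)^3,
        -(1/2) * deriv u t * (Γ₁ t)^2 * Γ₂ t + u t * Γ₁ t))
    (hV : ∀ t, V t = (-(1/2) * deriv v t * (Γ₁ t)^3,
        -(1/2) * deriv v t * (Γ₁ t)^2 * Γ₂ t + v t * Γ₁ t)) :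
    ∀ t, det2 (U t) (V t) =
      (1/2) * (u t * deriv v t - deriv u t * v t) / (deriv γ t)^2 := by
  intro t
  have deriv_at {f : ℝ → ℝ} (hf : ContDiff ℝ (⊤ : ℕ∞) f) : HasDerivAt f (deriv f t) t :=
    (hf.differentiable (by simp) t).hasDerivAt
  rw [hU, hV, hΓ₂, hΓ₁]
  exact omega_is_half_omega'_general (deriv_at hγ) (hpos t) (deriv_at hu) (deriv_at hv)
end

section
/- Let c ≠ 0 be real, Γ : ℝ → ℝ² smooth with [Γ(t), Γ'(t)] = 1 for all t, p : ℝ → ℝ smooth with Γ'' = pΓ, and a : ℝ → ℝ smooth with a' = (a² − 1)/c − cp. Set Δ := aΓ + cΓ' and q := p + 2a'/c. Then for all t: (i) Γ(t) = a(t)Δ(t) − cΔ'(t); (ii) Δ''(t) = q(t)Δ(t); (iii) p(t) + q(t) = 2(a(t)² − 1)/c². -/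
/-!
For `Δ = aΓ + cΓ'` the Riccati equation makes the Hill equation of `Γ` equivalent to the first-order
system `cΓ' = Δ - aΓ`, `cΔ' = aΔ - Γ`, whose second equation is the inversion formula. The system is
symmetric under exchanging `Γ` and `Δ` and replacing `c` by `-c`, so differentiating it once more
gives a Hill equation for each curve, with potentials `((a² - 1)/c ∓ a')/c`; these are `p` and `q`.
-/

open Real

section HillSystem

variable {𝕜 E : Type*} [NontriviallyNormedField 𝕜] [NormedAddCommGroup E] [NormedSpace 𝕜 E]
  {c : 𝕜} {a : 𝕜 → 𝕜} {Γ : 𝕜 → E}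

theorem hasDerivAt_smul_add_smul_of_riccati {Γ' : 𝕜 → E} {p t : 𝕜} (hc : c ≠ 0)
    (hΓ : HasDerivAt Γ (Γ' t) t) (hHill : HasDerivAt Γ' (p • Γ t) t)
    (hRic : HasDerivAt a ((a t ^ 2 - 1) / c - c * p) t) :
    HasDerivAt (fun s ↦ a s • Γ s + c • Γ' s)
      (c⁻¹ • (a t • (a t • Γ t + c • Γ' t) - Γ t)) t := by
  refine ((hRic.smul hΓ).add (hHill.const_smul c)).congr_deriv ?_
  match_scalars
  · field_simp
  · field_simp
    ring

theorem hasDerivAt_inv_smul_smul_sub {Δ : 𝕜 → E} {a' t : 𝕜}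
    (hΓ : HasDerivAt Γ (c⁻¹ • (Δ t - a t • Γ t)) t)
    (hΔ : HasDerivAt Δ (c⁻¹ • (a t • Δ t - Γ t)) t) (ha : HasDerivAt a a' t) :
    HasDerivAt (fun s ↦ c⁻¹ • (a s • Δ s - Γ s)) ((((a t ^ 2 - 1) / c + a') / c) • Δ t) t := by
  refine (((ha.smul hΔ).sub hΓ).const_smul c⁻¹).congr_deriv ?_
  match_scalars <;> ring

theorem T_c_relations_general {Δ : 𝕜 → E} {p q : 𝕜 → 𝕜} (hc : c ≠ 0)
    (hΓ : Differentiable 𝕜 Γ) (hΓ' : Differentiable 𝕜 (deriv Γ))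
    (hHill : ∀ t, deriv (deriv Γ) t = p t • Γ t) (ha : Differentiable 𝕜 a)
    (hRic : ∀ t, deriv a t = (a t ^ 2 - 1) / c - c * p t)
    (hΔ : ∀ t, Δ t = a t • Γ t + c • deriv Γ t)
    (hq : ∀ t, q t = p t + 2 * deriv a t / c) :
    (∀ t, Γ t = a t • Δ t - c • deriv Δ t) ∧
    (∀ t, deriv (deriv Δ) t = q t • Δ t) ∧
    (∀ t, p t + q t = 2 * (a t ^ 2 - 1) / c ^ 2) := by
  have hasDerivAt_Γ (t) : HasDerivAt Γ (c⁻¹ • (Δ t - a t • Γ t)) t := by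
    simpa only [hΔ, add_sub_cancel_left, inv_smul_smul₀ hc] using (hΓ t).hasDerivAt
  have hasDerivAt_Δ (t) : HasDerivAt Δ (c⁻¹ • (a t • Δ t - Γ t)) t := by
    rw [funext hΔ]
    exact hasDerivAt_smul_add_smul_of_riccati hc (hΓ t).hasDerivAt
      (hHill t ▸ (hΓ' t).hasDerivAt) (hRic t ▸ (ha t).hasDerivAt)
  have deriv_Δ : deriv Δ = fun t ↦ c⁻¹ • (a t • Δ t - Γ t) := deriv_eq hasDerivAt_Δ
  have q_eq (t) : q t = ((a t ^ 2 - 1) / c + deriv a t) / c := by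
    rw [hq, hRic]
    field_simp
    ring
  refine ⟨fun t ↦ ?_, fun t ↦ ?_, fun t ↦ ?_⟩
  · rw [deriv_Δ, smul_inv_smul₀ hc, sub_sub_cancel]
  · rw [deriv_Δ, q_eq]
    exact (hasDerivAt_inv_smul_smul_sub (hasDerivAt_Γ t) (hasDerivAt_Δ t) (ha t).hasDerivAt).deriv
  · rw [q_eq, hRic]
    field_simp
    ring

end HillSystem

/-- Relations between `Γ`, `Δ = aΓ + cΓ'` and their Hill potentials `p`, `q`:
`Γ = aΔ − cΔ'`, `Δ'' = qΔ`, and `p + q = 2(a² − 1)/c²`. -/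
theorem T_c_relations (c : ℝ) (hc : c ≠ 0)
    (Γ : ℝ → ℝ × ℝ) (hΓ : ContDiff ℝ (⊤ : ℕ∞) Γ)
    (hdet : ∀ t, det2 (Γ t) (deriv Γ t) = 1)
    (p : ℝ → ℝ) (hp : ContDiff ℝ (⊤ : ℕ∞) p)
    (hHill : ∀ t, deriv (deriv Γ) t = p t • Γ t)
    (a : ℝ → ℝ) (ha : ContDiff ℝ (⊤ : ℕ∞) a)
    (hRic : ∀ t, deriv a t = (a t ^ 2 - 1) / c - c * p t)
    (Δ : ℝ → ℝ × ℝ) (hΔ : ∀ t, Δ t = a t • Γ t + c • deriv Γ t)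
    (q : ℝ → ℝ) (hq : ∀ t, q t = p t + 2 * deriv a t / c) :
    (∀ t, Γ t = a t • Δ t - c • deriv Δ t) ∧
    (∀ t, deriv (deriv Δ) t = q t • Δ t) ∧
    (∀ t, p t + q t = 2 * (a t ^ 2 - 1) / c ^ 2) :=
  T_c_relations_general hc (hΓ.differentiable (by simp))
    ((contDiff_infty_iff_deriv.1 hΓ).2.differentiable (by simp)) hHill
    (ha.differentiable (by simp)) hRic hΔ hq
end

section
/- Let c ≠ 0 be real, Γ : ℝ → ℝ² smooth with [Γ, Γ'] = 1, p smooth with Γ'' = pΓ, a smooth with a' = (a² − 1)/c − cp, and Δ := aΓ + cΓ'. Let f, g : ℝ → ℝ be smooth, and set U := −½f'Γ + fΓ' and V := −½g'Δ + gΔ'. If [U(t), Δ(t)] + [Γ(t), V(t)] = 0 for all t, then (c/2)(f'(t) + g'(t)) = a(t)(g(t) − f(t)) for all t. -/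
/-!
Differentiating the relation `[Γ, Δ] = c` gives `[Γ, Δ'] = -[Γ', Δ]`, so for any curves in this
relation `[U, Δ] + [Γ, V] = (f - g) [Γ', Δ] - (c/2)(f' + g')`. When `Δ = aΓ + cΓ'` and
`[Γ, Γ'] = 1`, the remaining determinant is `[Γ', Δ] = -a`.
-/

open Real

section Algebra

variable (r : ℝ) (u v w : ℝ × ℝ)

lemma det2_self : det2 u u = 0 := by
  simp only [det2]
  ring

lemma det2_swap : det2 u v = -det2 v u := by
  simp only [det2]
  ring

lemma det2_add_left : det2 (u + v) w = det2 u w + det2 v w := by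
  simp only [det2, Prod.fst_add, Prod.snd_add]
  ring

lemma det2_smul_left : det2 (r • u) v = r * det2 u v := by
  simp only [det2, Prod.smul_fst, Prod.smul_snd, smul_eq_mul]
  ring

lemma det2_add_right : det2 u (v + w) = det2 u v + det2 u w := by
  rw [det2_swap, det2_add_left, neg_add, ← det2_swap, ← det2_swap]

lemma det2_smul_right : det2 u (r • v) = r * det2 u v := by
  rw [det2_swap, det2_smul_left, ← mul_neg, ← det2_swap]

end Algebra

section Derivative

variable {Γ Δ : ℝ → ℝ × ℝ} {t : ℝ}

lemma hasDerivAt_det2 {Γ' Δ' : ℝ × ℝ} (hΓ : HasDerivAt Γ Γ' t) (hΔ : HasDerivAt Δ Δ' t) :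
    HasDerivAt (fun s ↦ det2 (Γ s) (Δ s)) (det2 Γ' (Δ t) + det2 (Γ t) Δ') t := by
  have hΓ₁ : HasDerivAt (fun s ↦ (Γ s).1) Γ'.1 t :=
    (ContinuousLinearMap.fst ℝ ℝ ℝ).hasFDerivAt.comp_hasDerivAt t hΓ
  have hΓ₂ : HasDerivAt (fun s ↦ (Γ s).2) Γ'.2 t :=
    (ContinuousLinearMap.snd ℝ ℝ ℝ).hasFDerivAt.comp_hasDerivAt t hΓ
  have hΔ₁ : HasDerivAt (fun s ↦ (Δ s).1) Δ'.1 t :=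
    (ContinuousLinearMap.fst ℝ ℝ ℝ).hasFDerivAt.comp_hasDerivAt t hΔ
  have hΔ₂ : HasDerivAt (fun s ↦ (Δ s).2) Δ'.2 t :=
    (ContinuousLinearMap.snd ℝ ℝ ℝ).hasFDerivAt.comp_hasDerivAt t hΔ
  refine ((hΓ₁.mul hΔ₂).sub (hΓ₂.mul hΔ₁)).congr_deriv ?_
  simp only [det2]
  ring

lemma det2_deriv_right_of_det2_eq_const {c : ℝ} (hΓ : DifferentiableAt ℝ Γ t)
    (hΔ : DifferentiableAt ℝ Δ t) (hconst : ∀ s, det2 (Γ s) (Δ s) = c) :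
    det2 (Γ t) (deriv Δ t) = -det2 (deriv Γ t) (Δ t) := by
  have product_rule := hasDerivAt_det2 hΓ.hasDerivAt hΔ.hasDerivAt
  rw [funext hconst] at product_rule
  exact eq_neg_of_add_eq_zero_right (product_rule.unique (hasDerivAt_const t c))

end Derivative

/-- The tangent vector `U_f = -½f'Γ + fΓ'` along the curve `Γ`. -/
noncomputable def tangentField (Γ : ℝ → ℝ × ℝ) (f : ℝ → ℝ) (t : ℝ) : ℝ × ℝ :=
  (-(1 / 2) * deriv f t) • Γ t + f t • deriv Γ t

/-- The curve `Δ = aΓ + cΓ'` to which `T_c` sends `Γ`. The transformation `T_c` takes for `a` a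
solution of a Riccati equation; here `a` is an arbitrary function. -/
noncomputable def centroAffineTransform (c : ℝ) (a : ℝ → ℝ) (Γ : ℝ → ℝ × ℝ) (t : ℝ) : ℝ × ℝ :=
  a t • Γ t + c • deriv Γ t

section Transform

variable {c : ℝ} {Γ Δ : ℝ → ℝ × ℝ} {a f g : ℝ → ℝ} {t : ℝ}

lemma det2_tangentField_add_det2_tangentField (hΓ : DifferentiableAt ℝ Γ t)
    (hΔ : DifferentiableAt ℝ Δ t) (hconst : ∀ s, det2 (Γ s) (Δ s) = c) :
    det2 (tangentField Γ f t) (Δ t) + det2 (Γ t) (tangentField Δ g t) =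
      (f t - g t) * det2 (deriv Γ t) (Δ t) - c / 2 * (deriv f t + deriv g t) := by
  simp only [tangentField, det2_add_left, det2_add_right, det2_smul_left, det2_smul_right,
    hconst, det2_deriv_right_of_det2_eq_const hΓ hΔ hconst]
  ring

lemma det2_centroAffineTransform (hdet : det2 (Γ t) (deriv Γ t) = 1) :
    det2 (Γ t) (centroAffineTransform c a Γ t) = c := by
  simp only [centroAffineTransform, det2_add_right, det2_smul_right, det2_self, hdet, mul_zero,
    zero_add, mul_one]

lemma det2_deriv_centroAffineTransform (hdet : det2 (Γ t) (deriv Γ t) = 1) :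
    det2 (deriv Γ t) (centroAffineTransform c a Γ t) = -a t := by
  simp only [centroAffineTransform, det2_add_right, det2_smul_right, det2_self,
    det2_swap (deriv Γ t) (Γ t), hdet, mul_zero, add_zero, mul_neg_one]

lemma differentiableAt_centroAffineTransform (hΓ : DifferentiableAt ℝ Γ t)
    (hΓ' : DifferentiableAt ℝ (deriv Γ) t) (ha : DifferentiableAt ℝ a t) :
    DifferentiableAt ℝ (centroAffineTransform c a Γ) t :=
  (ha.smul hΓ).add (hΓ'.const_smul c)

theorem differential_T_c_general {f' g' : ℝ} (hΓ : DifferentiableAt ℝ Γ t)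
    (hdet : ∀ s, det2 (Γ s) (deriv Γ s) = 1)
    (hΔ : DifferentiableAt ℝ (centroAffineTransform c a Γ) t)
    (hf : HasDerivAt f f' t) (hg : HasDerivAt g g' t) :
    det2 (tangentField Γ f t) (centroAffineTransform c a Γ t) +
        det2 (Γ t) (tangentField (centroAffineTransform c a Γ) g t) = 0 ↔
      c / 2 * (f' + g') = a t * (g t - f t) := by
  rw [det2_tangentField_add_det2_tangentField hΓ hΔ fun s ↦ det2_centroAffineTransform (hdet s),
    det2_deriv_centroAffineTransform (hdet t), hf.deriv, hg.deriv, sub_eq_zero, eq_comm,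
    ← neg_sub (g t), neg_mul_neg, mul_comm (g t - f t)]

end Transform

/-- If tangent vectors `U = −½f'Γ + fΓ'` at `Γ` and `V = −½g'Δ + gΔ'` at
`Δ = aΓ + cΓ'` are related by the differential of `T_c`
(i.e. `[U, Δ] + [Γ, V] = 0`), then `(c/2)(f' + g') = a(g − f)`. -/
theorem differential_T_c (c : ℝ) (hc : c ≠ 0)
    (Γ : ℝ → ℝ × ℝ) (hΓ : ContDiff ℝ (⊤ : ℕ∞) Γ)
    (hdet : ∀ t, det2 (Γ t) (deriv Γ t) = 1)
    (p : ℝ → ℝ) (hp : ContDiff ℝ (⊤ : ℕ∞) p)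
    (hHill : ∀ t, deriv (deriv Γ) t = p t • Γ t)
    (a : ℝ → ℝ) (ha : ContDiff ℝ (⊤ : ℕ∞) a)
    (hRic : ∀ t, deriv a t = (a t ^ 2 - 1) / c - c * p t)
    (Δ : ℝ → ℝ × ℝ) (hΔ : ∀ t, Δ t = a t • Γ t + c • deriv Γ t)
    (f g : ℝ → ℝ) (hf : ContDiff ℝ (⊤ : ℕ∞) f) (hg : ContDiff ℝ (⊤ : ℕ∞) g)
    (U V : ℝ → ℝ × ℝ)
    (hU : ∀ t, U t = (-(1/2) * deriv f t) • Γ t + f t • deriv Γ t)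
    (hV : ∀ t, V t = (-(1/2) * deriv g t) • Δ t + g t • deriv Δ t)
    (hrel : ∀ t, det2 (U t) (Δ t) + det2 (Γ t) (V t) = 0) :
    ∀ t, c / 2 * (deriv f t + deriv g t) = a t * (g t - f t) := by
  obtain rfl : Δ = centroAffineTransform c a Γ := funext hΔ
  obtain rfl : U = tangentField Γ f := funext hU
  obtain rfl : V = tangentField (centroAffineTransform c a Γ) g := funext hV
  have infty_ne_zero : ((⊤ : ℕ∞) : WithTop ℕ∞) ≠ 0 := by simp
  have hΓ_diff := hΓ.differentiable infty_ne_zero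
  have hΓ'_diff := (contDiff_infty.1 hΓ 2).differentiable_deriv_two
  exact fun t ↦ (differential_T_c_general (hΓ_diff t) hdet
    (differentiableAt_centroAffineTransform (hΓ_diff t) (hΓ'_diff t)
      (ha.differentiable infty_ne_zero t))
    (hf.differentiable infty_ne_zero t).hasDerivAt
    (hg.differentiable infty_ne_zero t).hasDerivAt).1 (hrel t)
end

section
/- Let c ≠ 0 be real and let a, p, q, f₁, f₂, g₁, g₂ : ℝ → ℝ be smooth π-periodic functions such that q − p = 2a'/c, p + q = 2(a² − 1)/c², and (c/2)(fᵢ' + gᵢ') = a·(gᵢ − fᵢ) for i = 1, 2 and all t. Then ∫₀^π [¼(f₁'f₂'' − f₁''f₂') + p(f₁f₂' − f₁'f₂)] dt = ∫₀^π [¼(g₁'g₂'' − g₁''g₂') + q(g₁g₂' − g₁'g₂)] dt. (This is the invariance T_c*(Ω) = Ω of the second pre-symplectic form under the transformation T_c.) -/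
open Real

/-!
Put `b = 2a/c` and `uᵢ = gᵢ - fᵢ`, and write `W(x, y) = xy' - x'y`. The relation
`(fᵢ + gᵢ)' = b uᵢ` gives two polarization identities: `W(g₁', g₂') - W(f₁', f₂')` equals
`(b W(u₁, u₂)' - b' W(u₁, u₂)) / 2`, and, because `q - p = b'` and `(p + q)' = bb'`,
`q W(g₁, g₂) - p W(f₁, f₂)` equals `((p + q) (f₁g₂ - g₁f₂))' / 2 + b' W(u₁, u₂) / 4`.
Adding a quarter of the first identity to the second, the terms with `W(u₁, u₂)` combine to
`(b W(u₁, u₂))' / 8`. The two integrands thus differ by the derivative of a periodic function.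
-/

section Deriv

variable {𝕜 E : Type*} [NontriviallyNormedField 𝕜] [NormedAddCommGroup E] [NormedSpace 𝕜 E]

lemma periodic_deriv_s12 {f : 𝕜 → E} {T : 𝕜} (hf : Function.Periodic f T) :
    Function.Periodic (deriv f) T := fun t ↦ by
  rw [← deriv_comp_add_const, hf.funext]

lemma deriv_sub_of_differentiable {f g : 𝕜 → E} (hf : Differentiable 𝕜 f)
    (hg : Differentiable 𝕜 g) : deriv (f - g) = deriv f - deriv g :=
  funext fun t ↦ deriv_sub (hf t) (hg t)

end Deriv

lemma intervalIntegral_eq_of_hasDerivAt_sub {E : Type*} [NormedAddCommGroup E] [NormedSpace ℝ E]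
    [CompleteSpace E] {F G P : ℝ → E} {x y : ℝ} (hF : IntervalIntegrable F MeasureTheory.volume x y)
    (hG : IntervalIntegrable G MeasureTheory.volume x y)
    (hP : ∀ t ∈ Set.uIcc x y, HasDerivAt P (G t - F t) t) (hxy : P y = P x) :
    ∫ t in x..y, F t = ∫ t in x..y, G t := by
  have h := intervalIntegral.integral_eq_sub_of_hasDerivAt hP (hG.sub hF)
  rw [intervalIntegral.integral_sub hG hF, hxy, sub_self] at h
  exact (sub_eq_zero.1 h).symm

section Wronskian

variable {𝕜 A : Type*} [NontriviallyNormedField 𝕜] [NormedRing A] [NormedAlgebra 𝕜 A]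
  {f g : 𝕜 → A}

/-- The Wronskian `fg' - f'g` of two functions of one variable. -/
noncomputable def wronskian (f g : 𝕜 → A) (t : 𝕜) : A :=
  f t * deriv g t - deriv f t * g t

lemma hasDerivAt_wronskian (hf : ContDiff 𝕜 2 f) (hg : ContDiff 𝕜 2 g) (t : 𝕜) :
    HasDerivAt (wronskian f g) (f t * deriv (deriv g) t - deriv (deriv f) t * g t) t := by
  have hf₀ := (hf.differentiable two_ne_zero t).hasDerivAt
  have hg₀ := (hg.differentiable two_ne_zero t).hasDerivAt
  have hf₁ := (hf.differentiable_deriv_two t).hasDerivAt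
  have hg₁ := (hg.differentiable_deriv_two t).hasDerivAt
  refine ((hf₀.mul hg₁).sub (hf₁.mul hg₀)).congr_deriv ?_
  abel

lemma continuous_wronskian (hf : ContDiff 𝕜 1 f) (hg : ContDiff 𝕜 1 g) :
    Continuous (wronskian f g) :=
  (hf.continuous.mul hg.continuous_deriv_one).sub (hf.continuous_deriv_one.mul hg.continuous)

lemma periodic_wronskian {T : 𝕜} (hf : Function.Periodic f T) (hg : Function.Periodic g T) :
    Function.Periodic (wronskian f g) T := fun t ↦ by
  simp only [wronskian, hf t, hg t, periodic_deriv_s12 hf t, periodic_deriv_s12 hg t]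

end Wronskian

section TangentRelated

variable {𝕜 : Type*} [RCLike 𝕜] {b p q f g f₁ f₂ g₁ g₂ : ℝ → 𝕜}

/-- The integrand of the second pre-symplectic form `Ω(U_f, V_g)` at a curve with Hill
potential `p`. -/
noncomputable def omegaDensity (p f g : ℝ → 𝕜) (t : ℝ) : 𝕜 :=
  1 / 4 * wronskian (deriv f) (deriv g) t + p t * wronskian f g t

lemma continuous_omegaDensity (hp : Continuous p) (hf : ContDiff ℝ 2 f) (hg : ContDiff ℝ 2 g) :
    Continuous (omegaDensity p f g) :=
  (continuous_const.mul (continuous_wronskian (ContDiff.deriv' hf) (ContDiff.deriv' hg))).add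
    (hp.mul (continuous_wronskian (hf.of_le one_le_two) (hg.of_le one_le_two)))

/-- The tangent vectors `U_f` at `Γ` and `V_g` at `aΓ + cΓ'` correspond under the differential of
`Γ ↦ aΓ + cΓ'`; only the ratio `b = 2a/c` enters. -/
def TangentRelated (b f g : ℝ → 𝕜) : Prop :=
  ∀ t, deriv f t + deriv g t = b t * (g t - f t)

lemma TangentRelated.deriv_deriv (h : TangentRelated b f g) (hb : Differentiable ℝ b)
    (hf : ContDiff ℝ 2 f) (hg : ContDiff ℝ 2 g) (t : ℝ) :
    deriv (deriv f) t + deriv (deriv g) t =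
      deriv b t * (g t - f t) + b t * (deriv g t - deriv f t) := by
  have hsum := (hf.differentiable_deriv_two t).hasDerivAt.add
    (hg.differentiable_deriv_two t).hasDerivAt
  have hprod := (hb t).hasDerivAt.mul
    ((hg.differentiable two_ne_zero t).hasDerivAt.sub (hf.differentiable two_ne_zero t).hasDerivAt)
  exact hsum.unique (hprod.congr_of_eventuallyEq (.of_forall h))

lemma TangentRelated.wronskian_deriv_sub_wronskian_deriv (h₁ : TangentRelated b f₁ g₁)
    (h₂ : TangentRelated b f₂ g₂) (hb : Differentiable ℝ b) (hf₁ : ContDiff ℝ 2 f₁)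
    (hf₂ : ContDiff ℝ 2 f₂) (hg₁ : ContDiff ℝ 2 g₁) (hg₂ : ContDiff ℝ 2 g₂) (t : ℝ) :
    wronskian (deriv g₁) (deriv g₂) t - wronskian (deriv f₁) (deriv f₂) t =
      (b t * deriv (wronskian (g₁ - f₁) (g₂ - f₂)) t
        - deriv b t * wronskian (g₁ - f₁) (g₂ - f₂) t) / 2 := by
  have hsub {f g : ℝ → 𝕜} (hf : ContDiff ℝ 2 f) (hg : ContDiff ℝ 2 g) :
      deriv (g - f) = deriv g - deriv f :=
    deriv_sub_of_differentiable (hg.differentiable two_ne_zero) (hf.differentiable two_ne_zero)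
  have hsub' {f g : ℝ → 𝕜} (hf : ContDiff ℝ 2 f) (hg : ContDiff ℝ 2 g) :
      deriv (deriv (g - f)) = deriv (deriv g) - deriv (deriv f) := by
    rw [hsub hf hg,
      deriv_sub_of_differentiable hg.differentiable_deriv_two hf.differentiable_deriv_two]
  have hW : deriv (wronskian (g₁ - f₁) (g₂ - f₂)) t =
      (g₁ - f₁) t * deriv (deriv (g₂ - f₂)) t - deriv (deriv (g₁ - f₁)) t * (g₂ - f₂) t :=
    (hasDerivAt_wronskian (hg₁.sub hf₁) (hg₂.sub hf₂) t).deriv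
  rw [hW, hsub' hf₁ hg₁, hsub' hf₂ hg₂]
  simp only [wronskian, hsub hf₁ hg₁, hsub hf₂ hg₂, Pi.sub_apply]
  linear_combination
    (deriv (deriv g₂) t - deriv (deriv f₂) t) / 2 * h₁ t
    - (deriv (deriv g₁) t - deriv (deriv f₁) t) / 2 * h₂ t
    - (deriv g₂ t - deriv f₂ t) / 2 * h₁.deriv_deriv hb hf₁ hg₁ t
    + (deriv g₁ t - deriv f₁ t) / 2 * h₂.deriv_deriv hb hf₂ hg₂ t

lemma TangentRelated.mul_wronskian_sub_mul_wronskian (h₁ : TangentRelated b f₁ g₁)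
    (h₂ : TangentRelated b f₂ g₂) (hf₁ : Differentiable ℝ f₁) (hf₂ : Differentiable ℝ f₂)
    (hg₁ : Differentiable ℝ g₁) (hg₂ : Differentiable ℝ g₂) (r s : 𝕜) (t : ℝ) :
    s * wronskian g₁ g₂ t - r * wronskian f₁ f₂ t =
      (b t * (s - r) * (f₁ * g₂ - g₁ * f₂) t
        + (r + s) * deriv (f₁ * g₂ - g₁ * f₂) t) / 2
      + (s - r) * wronskian (g₁ - f₁) (g₂ - f₂) t / 4 := by
  rw [deriv_sub ((hf₁ t).mul (hg₂ t)) ((hg₁ t).mul (hf₂ t)), deriv_mul (hf₁ t) (hg₂ t),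
    deriv_mul (hg₁ t) (hf₂ t)]
  simp only [wronskian, deriv_sub_of_differentiable hg₁ hf₁, deriv_sub_of_differentiable hg₂ hf₂,
    Pi.sub_apply, Pi.mul_apply]
  linear_combination
    (s - r) / 4 * ((g₁ t + f₁ t) * h₂ t - (g₂ t + f₂ t) * h₁ t)
    + (r + s) / 2 * ((g₁ t - f₁ t) * h₂ t - (g₂ t - f₂ t) * h₁ t)

/-- A primitive of the difference of the densities of `Ω` at the Hill potentials `q` and `p`,
evaluated on two related pairs of tangent vectors. -/
noncomputable def omegaPrimitive (b p q f₁ f₂ g₁ g₂ : ℝ → 𝕜) (t : ℝ) : 𝕜 :=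
  (p + q) t * (f₁ * g₂ - g₁ * f₂) t / 2 + b t * wronskian (g₁ - f₁) (g₂ - f₂) t / 8

lemma hasDerivAt_omegaPrimitive (h₁ : TangentRelated b f₁ g₁) (h₂ : TangentRelated b f₂ g₂)
    (hb : Differentiable ℝ b) (hf₁ : ContDiff ℝ 2 f₁) (hf₂ : ContDiff ℝ 2 f₂)
    (hg₁ : ContDiff ℝ 2 g₁) (hg₂ : ContDiff ℝ 2 g₂) {t : ℝ} (hdiff : q t - p t = deriv b t)
    (hsum : HasDerivAt (p + q) (b t * deriv b t) t) :
    HasDerivAt (omegaPrimitive b p q f₁ f₂ g₁ g₂)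
      (omegaDensity q g₁ g₂ t - omegaDensity p f₁ f₂ t) t := by
  have df₁ := hf₁.differentiable two_ne_zero
  have df₂ := hf₂.differentiable two_ne_zero
  have dg₁ := hg₁.differentiable two_ne_zero
  have dg₂ := hg₂.differentiable two_ne_zero
  have hD : HasDerivAt (f₁ * g₂ - g₁ * f₂) (deriv (f₁ * g₂ - g₁ * f₂) t) t :=
    (((df₁ t).mul (dg₂ t)).sub ((dg₁ t).mul (df₂ t))).hasDerivAt
  have hW : HasDerivAt (wronskian (g₁ - f₁) (g₂ - f₂))
      (deriv (wronskian (g₁ - f₁) (g₂ - f₂)) t) t :=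
    (hasDerivAt_wronskian (hg₁.sub hf₁) (hg₂.sub hf₂) t).differentiableAt.hasDerivAt
  refine (((hsum.mul hD).div_const 2).add (((hb t).hasDerivAt.mul hW).div_const 8)).congr_deriv ?_
  have hderiv := h₁.wronskian_deriv_sub_wronskian_deriv h₂ hb hf₁ hf₂ hg₁ hg₂ t
  have hpot := h₁.mul_wronskian_sub_mul_wronskian h₂ df₁ df₂ dg₁ dg₂ (p t) (q t) t
  rw [hdiff] at hpot
  simp only [omegaDensity, Pi.add_apply]
  linear_combination -hderiv / 4 - hpot

lemma periodic_omegaPrimitive {T : ℝ} (hb : Function.Periodic b T)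
    (hpq : Function.Periodic (p + q) T)
    (hf₁ : Function.Periodic f₁ T) (hf₂ : Function.Periodic f₂ T)
    (hg₁ : Function.Periodic g₁ T) (hg₂ : Function.Periodic g₂ T) :
    Function.Periodic (omegaPrimitive b p q f₁ f₂ g₁ g₂) T := fun t ↦ by
  have hD := ((hf₁.mul hg₂).sub (hg₁.mul hf₂)) t
  have hW := periodic_wronskian (hg₁.sub hf₁) (hg₂.sub hf₂) t
  rw [omegaPrimitive, hpq t, hD, hb t, hW, omegaPrimitive]

lemma tangentRelated_of_mul_eq {c : 𝕜} (hc : c ≠ 0) {a : ℝ → 𝕜}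
    (h : ∀ t, c / 2 * (deriv f t + deriv g t) = a t * (g t - f t)) :
    TangentRelated (fun t ↦ 2 * a t / c) f g := fun t ↦ by
  have ht := h t
  field_simp at ht ⊢
  linear_combination ht

/-- The number `δ` stands for the constant value of the determinant `[Δ, Δ']` of the transformed
curve `Δ = aΓ + cΓ'`, which is normalized to `1` for centro-affine curves. -/
theorem Omega_invariant_general (c δ : 𝕜) (hc : c ≠ 0) {a : ℝ → 𝕜} {T : ℝ}
    (ha : ContDiff ℝ 1 a) (hf₁ : ContDiff ℝ 2 f₁) (hf₂ : ContDiff ℝ 2 f₂)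
    (hg₁ : ContDiff ℝ 2 g₁) (hg₂ : ContDiff ℝ 2 g₂)
    (haper : Function.Periodic a T)
    (hf₁per : Function.Periodic f₁ T) (hf₂per : Function.Periodic f₂ T)
    (hg₁per : Function.Periodic g₁ T) (hg₂per : Function.Periodic g₂ T)
    (hdiff : ∀ t, q t - p t = 2 * deriv a t / c)
    (hsum : ∀ t, p t + q t = 2 * (a t ^ 2 - δ) / c ^ 2)
    (hrel₁ : ∀ t, c / 2 * (deriv f₁ t + deriv g₁ t) = a t * (g₁ t - f₁ t))
    (hrel₂ : ∀ t, c / 2 * (deriv f₂ t + deriv g₂ t) = a t * (g₂ t - f₂ t)) :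
    ∫ t in (0 : ℝ)..T, omegaDensity p f₁ f₂ t = ∫ t in (0 : ℝ)..T, omegaDensity q g₁ g₂ t := by
  have ha₀ : Differentiable ℝ a := ha.differentiable one_ne_zero
  have hp : Continuous p := by
    rw [show p = fun t ↦ (a t ^ 2 - δ) / c ^ 2 - deriv a t / c from
      funext fun t ↦ by linear_combination (hsum t - hdiff t) / 2]
    fun_prop
  have hq : Continuous q := by
    rw [show q = fun t ↦ (a t ^ 2 - δ) / c ^ 2 + deriv a t / c from
      funext fun t ↦ by linear_combination (hsum t + hdiff t) / 2]
    fun_prop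
  have hb (t : ℝ) : HasDerivAt (fun s ↦ 2 * a s / c) (2 * deriv a t / c) t :=
    ((ha₀ t).hasDerivAt.const_mul 2).div_const c
  have hpq : p + q = fun t ↦ 2 * (a t ^ 2 - δ) / c ^ 2 := funext hsum
  have hpq' (t : ℝ) : HasDerivAt (p + q) (2 * a t / c * deriv (fun s ↦ 2 * a s / c) t) t := by
    rw [hpq, (hb t).deriv]
    refine (((((ha₀ t).hasDerivAt.pow 2).sub_const δ).const_mul 2).div_const (c ^ 2)).congr_deriv ?_
    ring
  have hprimitive (t : ℝ) : HasDerivAt (omegaPrimitive (fun s ↦ 2 * a s / c) p q f₁ f₂ g₁ g₂)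
      (omegaDensity q g₁ g₂ t - omegaDensity p f₁ f₂ t) t :=
    hasDerivAt_omegaPrimitive (tangentRelated_of_mul_eq hc hrel₁)
      (tangentRelated_of_mul_eq hc hrel₂) (fun s ↦ (hb s).differentiableAt) hf₁ hf₂ hg₁ hg₂
      ((hdiff t).trans (hb t).deriv.symm) (hpq' t)
  have hperiodic : Function.Periodic (omegaPrimitive (fun s ↦ 2 * a s / c) p q f₁ f₂ g₁ g₂) T :=
    periodic_omegaPrimitive (fun t ↦ by simp only [haper t])
      (fun t ↦ by simp only [hpq, haper t]) hf₁per hf₂per hg₁per hg₂per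
  exact intervalIntegral_eq_of_hasDerivAt_sub
    ((continuous_omegaDensity hp hf₁ hf₂).intervalIntegrable 0 T)
    ((continuous_omegaDensity hq hg₁ hg₂).intervalIntegrable 0 T)
    (fun t _ ↦ hprimitive t) hperiodic.eq

end TangentRelated

/-- Invariance `T_c*(Ω) = Ω` of the second pre-symplectic form: if `q − p = 2a'/c`,
`p + q = 2(a² − 1)/c²`, and pairs of π-periodic functions `(fᵢ, gᵢ)` satisfy
`(c/2)(fᵢ' + gᵢ') = a(gᵢ − fᵢ)`, then
`∫₀^π [¼(f₁'f₂'' − f₁''f₂') + p(f₁f₂' − f₁'f₂)] dt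
  = ∫₀^π [¼(g₁'g₂'' − g₁''g₂') + q(g₁g₂' − g₁'g₂)] dt`. -/
theorem Omega_invariant (c : ℝ) (hc : c ≠ 0)
    (a p q f₁ f₂ g₁ g₂ : ℝ → ℝ)
    (ha : ContDiff ℝ (⊤ : ℕ∞) a) (hp : ContDiff ℝ (⊤ : ℕ∞) p) (hq : ContDiff ℝ (⊤ : ℕ∞) q)
    (hf₁ : ContDiff ℝ (⊤ : ℕ∞) f₁) (hf₂ : ContDiff ℝ (⊤ : ℕ∞) f₂)
    (hg₁ : ContDiff ℝ (⊤ : ℕ∞) g₁) (hg₂ : ContDiff ℝ (⊤ : ℕ∞) g₂)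
    (haper : ∀ t, a (t + π) = a t)
    (hpper : ∀ t, p (t + π) = p t) (hqper : ∀ t, q (t + π) = q t)
    (hf₁per : ∀ t, f₁ (t + π) = f₁ t) (hf₂per : ∀ t, f₂ (t + π) = f₂ t)
    (hg₁per : ∀ t, g₁ (t + π) = g₁ t) (hg₂per : ∀ t, g₂ (t + π) = g₂ t)
    (hdiff : ∀ t, q t - p t = 2 * deriv a t / c)
    (hsum : ∀ t, p t + q t = 2 * (a t ^ 2 - 1) / c ^ 2)
    (hrel₁ : ∀ t, c / 2 * (deriv f₁ t + deriv g₁ t) = a t * (g₁ t - f₁ t))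
    (hrel₂ : ∀ t, c / 2 * (deriv f₂ t + deriv g₂ t) = a t * (g₂ t - f₂ t)) :
    ∫ t in (0:ℝ)..π,
        ((1/4) * (deriv f₁ t * deriv (deriv f₂) t - deriv (deriv f₁) t * deriv f₂ t)
          + p t * (f₁ t * deriv f₂ t - deriv f₁ t * f₂ t)) =
      ∫ t in (0:ℝ)..π,
        ((1/4) * (deriv g₁ t * deriv (deriv g₂) t - deriv (deriv g₁) t * deriv g₂ t)
          + q t * (g₁ t * deriv g₂ t - deriv g₁ t * g₂ t)) :=
  Omega_invariant_general c 1 hc (contDiff_infty.1 ha 1) (contDiff_infty.1 hf₁ 2)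
    (contDiff_infty.1 hf₂ 2) (contDiff_infty.1 hg₁ 2) (contDiff_infty.1 hg₂ 2)
    haper hf₁per hf₂per hg₁per hg₂per hdiff hsum hrel₁ hrel₂
end

section
/- Let c ≠ 0 be real, Γ = (Γ₁, Γ₂) : ℝ → ℝ² smooth with [Γ(t), Γ'(t)] = 1 and Γ(t + π) = −Γ(t) for all t, and p : ℝ → ℝ smooth with Γ'' = pΓ. Let a : ℝ → ℝ be smooth and π-periodic with a' = (a² − 1)/c − cp, and set Δ = (Δ₁, Δ₂) := aΓ + cΓ'. Then ∫₀^π Δ₁(t)² dt = ∫₀^π Γ₁(t)² dt, ∫₀^π Δ₁(t)Δ₂(t) dt = ∫₀^π Γ₁(t)Γ₂(t) dt, and ∫₀^π Δ₂(t)² dt = ∫₀^π Γ₂(t)² dt. (The functionals I, J, K are integrals of the transformations T_c.) -/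
open Real

/-!
For every bilinear form `B`, the Riccati equation `a² = 1 + c a' + c² p` and the Hill equation
`Γ'' = p Γ` make the difference of densities exact:
`B(Δ, Δ) - B(Γ, Γ) = (c a B(Γ, Γ) + c² B(Γ, Γ'))'` for `Δ = a Γ + c Γ'`.
If the monodromy of `Γ` preserves `B`, the primitive takes the same value at both ends of a period,
so `Δ` and `Γ` have the same integral of `B`. The monodromy of a closed centro-affine curve is `-1`,
which preserves every bilinear form, in particular the three whose integrals are `I`, `J` and `K`.
-/

section HillRiccati

variable {E F G : Type*} [NormedAddCommGroup E] [NormedSpace ℝ E] [NormedAddCommGroup F]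
  [NormedSpace ℝ F] [NormedAddCommGroup G] [NormedSpace ℝ G]

lemma hasDerivAt_riccati_hill_primitive (B : E →L[ℝ] F →L[ℝ] G) {c p t : ℝ} (hc : c ≠ 0)
    {a : ℝ → ℝ} {x : ℝ → E} {x' : E} {y y' : ℝ → F}
    (ha : HasDerivAt a ((a t ^ 2 - 1) / c - c * p) t) (hx : HasDerivAt x x' t)
    (hy : HasDerivAt y (y' t) t) (hy' : HasDerivAt y' (p • y t) t) :
    HasDerivAt (fun s ↦ (c * a s) • B (x s) (y s) + c ^ 2 • B (x s) (y' s))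
      (B (a t • x t + c • x') (a t • y t + c • y' t) - B (x t) (y t)) t := by
  have hriccati : c * ((a t ^ 2 - 1) / c - c * p) = a t ^ 2 - 1 - c ^ 2 * p := by
    field_simp
  have hxy := B.hasDerivAt_of_bilinear (fun _ ↦ hx) (fun _ ↦ hy)
  have hxy' := B.hasDerivAt_of_bilinear (fun _ ↦ hx) (fun _ ↦ hy')
  refine (((ha.const_mul c).smul hxy).add (hxy'.const_smul (c ^ 2))).congr_deriv ?_
  rw [hriccati]
  simp only [map_add, map_smul, add_apply, smul_apply]
  module

lemma integral_riccati_transform_sub [CompleteSpace G] (B : E →L[ℝ] F →L[ℝ] G) {c : ℝ}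
    (hc : c ≠ 0) {a p : ℝ → ℝ} {x x' : ℝ → E} {y y' : ℝ → F}
    (ha : ∀ t, HasDerivAt a ((a t ^ 2 - 1) / c - c * p t) t)
    (hx : ∀ t, HasDerivAt x (x' t) t) (hx' : Continuous x')
    (hy : ∀ t, HasDerivAt y (y' t) t) (hy' : ∀ t, HasDerivAt y' (p t • y t) t) (t₀ t₁ : ℝ) :
    (∫ t in t₀..t₁, B (a t • x t + c • x' t) (a t • y t + c • y' t)) -
        ∫ t in t₀..t₁, B (x t) (y t) =
      ((c * a t₁) • B (x t₁) (y t₁) + c ^ 2 • B (x t₁) (y' t₁)) -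
        ((c * a t₀) • B (x t₀) (y t₀) + c ^ 2 • B (x t₀) (y' t₀)) := by
  have ha_cont : Continuous a := continuous_iff_continuousAt.2 fun t ↦ (ha t).continuousAt
  have hx_cont : Continuous x := continuous_iff_continuousAt.2 fun t ↦ (hx t).continuousAt
  have hy_cont : Continuous y := continuous_iff_continuousAt.2 fun t ↦ (hy t).continuousAt
  have hy'_cont : Continuous y' := continuous_iff_continuousAt.2 fun t ↦ (hy' t).continuousAt
  have htransform : Continuous fun t ↦ B (a t • x t + c • x' t) (a t • y t + c • y' t) := by
    fun_prop
  have horiginal : Continuous fun t ↦ B (x t) (y t) := by fun_prop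
  rw [← intervalIntegral.integral_sub (htransform.intervalIntegrable _ _)
    (horiginal.intervalIntegrable _ _)]
  exact intervalIntegral.integral_eq_sub_of_hasDerivAt
    (fun t _ ↦ hasDerivAt_riccati_hill_primitive B hc (ha t) (hx t) (hy t) (hy' t))
    ((htransform.sub horiginal).intervalIntegrable _ _)

lemma deriv_add_eq_clm_apply_deriv {M : E →L[ℝ] F} {f : ℝ → E} {g : ℝ → F} {T t : ℝ}
    (hf : DifferentiableAt ℝ f t) (hfg : ∀ s, g (s + T) = M (f s)) :
    deriv g (t + T) = M (deriv f t) := by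
  rw [← deriv_comp_add_const g T t, funext hfg]
  exact (M.hasFDerivAt.comp_hasDerivAt t hf.hasDerivAt).deriv

theorem IJK_invariant_general [CompleteSpace G] (B : E →L[ℝ] E →L[ℝ] G) {c T : ℝ} (hc : c ≠ 0)
    {M : E →L[ℝ] E} (hM : ∀ v w, B (M v) (M w) = B v w)
    {Γ : ℝ → E} (hΓ : Differentiable ℝ Γ) (hΓ' : Differentiable ℝ (deriv Γ))
    (hmonodromy : ∀ t, Γ (t + T) = M (Γ t))
    {p : ℝ → ℝ} (hHill : ∀ t, deriv (deriv Γ) t = p t • Γ t)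
    {a : ℝ → ℝ} (ha : Differentiable ℝ a) (haper : Function.Periodic a T)
    (hRic : ∀ t, deriv a t = (a t ^ 2 - 1) / c - c * p t)
    {Δ : ℝ → E} (hΔ : ∀ t, Δ t = a t • Γ t + c • deriv Γ t) :
    ∫ t in 0..T, B (Δ t) (Δ t) = ∫ t in 0..T, B (Γ t) (Γ t) := by
  have haT : a T = a 0 := haper.eq
  have hΓT : Γ T = M (Γ 0) := by simpa using hmonodromy 0
  have hΓ'T : deriv Γ T = M (deriv Γ 0) := by
    simpa using deriv_add_eq_clm_apply_deriv (hΓ 0) hmonodromy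
  have hdiff := integral_riccati_transform_sub B hc
    (fun t ↦ hRic t ▸ (ha t).hasDerivAt) (fun t ↦ (hΓ t).hasDerivAt) hΓ'.continuous
    (fun t ↦ (hΓ t).hasDerivAt) (fun t ↦ hHill t ▸ (hΓ' t).hasDerivAt) 0 T
  rw [haT, hΓT, hΓ'T, hM, hM, sub_self] at hdiff
  simpa only [hΔ] using sub_eq_zero.1 hdiff

end HillRiccati

/-- The functionals `I = ∫₀^π Γ₁²`, `J = ∫₀^π Γ₁Γ₂`, `K = ∫₀^π Γ₂²` are integrals
of the transformation `T_c : Γ ↦ Δ = aΓ + cΓ'`. -/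
theorem IJK_invariant (c : ℝ) (hc : c ≠ 0)
    (Γ : ℝ → ℝ × ℝ) (hΓ : ContDiff ℝ (⊤ : ℕ∞) Γ)
    (hdet : ∀ t, det2 (Γ t) (deriv Γ t) = 1)
    (hanti : ∀ t, Γ (t + π) = -Γ t)
    (p : ℝ → ℝ) (hp : ContDiff ℝ (⊤ : ℕ∞) p)
    (hHill : ∀ t, deriv (deriv Γ) t = p t • Γ t)
    (a : ℝ → ℝ) (ha : ContDiff ℝ (⊤ : ℕ∞) a) (haper : ∀ t, a (t + π) = a t)
    (hRic : ∀ t, deriv a t = (a t ^ 2 - 1) / c - c * p t)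
    (Δ : ℝ → ℝ × ℝ) (hΔ : ∀ t, Δ t = a t • Γ t + c • deriv Γ t) :
    (∫ t in (0:ℝ)..π, ((Δ t).1) ^ 2 = ∫ t in (0:ℝ)..π, ((Γ t).1) ^ 2) ∧
    (∫ t in (0:ℝ)..π, (Δ t).1 * (Δ t).2 = ∫ t in (0:ℝ)..π, (Γ t).1 * (Γ t).2) ∧
    (∫ t in (0:ℝ)..π, ((Δ t).2) ^ 2 = ∫ t in (0:ℝ)..π, ((Γ t).2) ^ 2) := by
  have hinv (f g : ℝ × ℝ →L[ℝ] ℝ) := IJK_invariant_general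
    ((ContinuousLinearMap.mul ℝ ℝ).bilinearComp f g) hc (M := -.id ℝ _) (by simp)
    (hΓ.differentiable (by simp)) ((contDiff_infty_iff_deriv.1 hΓ).2.differentiable (by simp))
    hanti hHill (ha.differentiable (by simp)) haper hRic hΔ
  simpa [pow_two] using ⟨hinv (.fst ℝ ℝ ℝ) (.fst ℝ ℝ ℝ), hinv (.fst ℝ ℝ ℝ) (.snd ℝ ℝ ℝ),
    hinv (.snd ℝ ℝ ℝ) (.snd ℝ ℝ ℝ)⟩
end

section
/- Let γ, γ₁, γ₂, μ, ν be real numbers with μ ≠ 0, ν ≠ 0 and 1/μ + 1/ν = 1. Then (1/μ)·[[γ − μγ₂, γγ₂(μ − 1)], [1 − μ, γμ − γ₂]]·(γ₁, 1)ᵀ = (1/ν)·[[γ − νγ₁, γγ₁(ν − 1)], [1 − ν, γν − γ₁]]·(γ₂, 1)ᵀ, as an equality of vectors in ℝ². (This identity is the key step in Bianchi permutability: it shows A_{μ,γ,γ₂}(γ₁(0)) = A_{ν,γ,γ₁}(γ₂(0)), producing the fourth curve γ₁₂ with γ₁ ∼_{c₂} γ₁₂ and γ₂ ∼_{c₁}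 γ₁₂.) -/
open Real

/-!
In homogeneous coordinates the matrix of `A_{μ,γ,δ}` is a combination of two rank-one matrices, so
it sends `(x, 1)` to `(x - δ) • (γ, 1) - μ • (x - γ) • (δ, 1)`. After division by `μ`, resp. `ν`,
the terms in `(γ₁, 1)` and `(γ₂, 1)` no longer involve the parameters, and those in `(γ, 1)` differ
by `(1/μ + 1/ν) (γ₁ - γ₂) = γ₁ - γ₂`. What remains is the Plücker relation between the three
vectors `(γ, 1)`, `(γ₁, 1)`, `(γ₂, 1)` of the plane.
-/

section BianchiPermutability

open Matrix

variable {R : Type*} [CommRing R]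

/-- The matrix `(γ - δ) • A_{μ,γ,δ}` which conjugates the monodromies of two related curves
through `γ` and `δ`. The projectively irrelevant denominator of `A_{μ,γ,δ}` is cleared, so that
the matrix makes sense over any commutative ring and for `γ = δ`. -/
def monodromyConjugator (μ γ δ : R) : Matrix (Fin 2) (Fin 2) R :=
  !![γ - μ * δ, γ * δ * (μ - 1); 1 - μ, γ * μ - δ]

lemma monodromyConjugator_eq_sub_vecMulVec (μ γ δ : R) :
    monodromyConjugator μ γ δ =
      vecMulVec ![γ, 1] ![1, -δ] - μ • vecMulVec ![δ, 1] ![1, -γ] := by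
  ext i j
  fin_cases i <;> fin_cases j <;> simp [monodromyConjugator] <;> ring

lemma monodromyConjugator_mulVec (μ γ δ x : R) :
    monodromyConjugator μ γ δ *ᵥ ![x, 1] =
      (x - δ) • ![γ, 1] - μ • (x - γ) • ![δ, 1] := by
  have dotProduct_eq_sub (y : R) : ![1, -y] ⬝ᵥ ![x, 1] = x - y := by
    simp [sub_eq_add_neg]
  simp only [monodromyConjugator_eq_sub_vecMulVec, sub_mulVec, smul_mulVec, vecMulVec_mulVec,
    dotProduct_eq_sub, op_smul_eq_smul]

lemma inv_smul_monodromyConjugator_mulVec (μ : Rˣ) (γ δ x : R) :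
    (↑μ⁻¹ : R) • monodromyConjugator (μ : R) γ δ *ᵥ ![x, 1] =
      (↑μ⁻¹ : R) • (x - δ) • ![γ, 1] - (x - γ) • ![δ, 1] := by
  rw [monodromyConjugator_mulVec, smul_sub, smul_smul (↑μ⁻¹ : R) (μ : R), Units.inv_mul, one_smul]

lemma plucker_relation_affine (x y z : R) :
    (y - z) • ![x, 1] + (z - x) • ![y, 1] + (x - y) • ![z, 1] = 0 := by
  ext i
  fin_cases i
  · simp
    ring
  · simp

theorem bianchi_permutability_key_general (γ γ₁ γ₂ : R) (μ ν : Rˣ)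
    (h : (↑μ⁻¹ : R) + ↑ν⁻¹ = 1) :
    (↑μ⁻¹ : R) • monodromyConjugator (μ : R) γ γ₂ *ᵥ ![γ₁, 1] =
      (↑ν⁻¹ : R) • monodromyConjugator (ν : R) γ γ₁ *ᵥ ![γ₂, 1] := by
  rw [inv_smul_monodromyConjugator_mulVec, inv_smul_monodromyConjugator_mulVec]
  have plucker := plucker_relation_affine γ γ₁ γ₂
  linear_combination (norm := module) plucker + h • (γ₁ - γ₂) • ![γ, 1]

end BianchiPermutability

/-- The key algebraic identity in the proof of Bianchi permutability: if
`1/μ + 1/ν = 1`, then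
`(1/μ)·A_{μ,γ,γ₂}·(γ₁, 1)ᵀ = (1/ν)·A_{ν,γ,γ₁}·(γ₂, 1)ᵀ`
(with the common factor `1/(γ − γᵢ)` removed). -/
theorem bianchi_permutability_key (γ γ₁ γ₂ μ ν : ℝ)
    (hμ : μ ≠ 0) (hν : ν ≠ 0) (h : 1 / μ + 1 / ν = 1) :
    (1 / μ) • (!![γ - μ * γ₂, γ * γ₂ * (μ - 1); 1 - μ, γ * μ - γ₂]).mulVec ![γ₁, 1] =
      (1 / ν) • (!![γ - ν * γ₁, γ * γ₁ * (ν - 1); 1 - ν, γ * ν - γ₁]).mulVec ![γ₂, 1] := by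
  rw [one_div, one_div] at h ⊢
  exact bianchi_permutability_key_general γ γ₁ γ₂ (.mk0 μ hμ) (.mk0 ν hν) h
end
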